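/- If both A and B are non-classical state spaces (neither Ω_A nor Ω_B is a simplex), then the maximal tensor product A ⊗_max B strictly contains the minimal tensor product A ⊗_min B; i.e., there exists an entangled state: a positive bilinear form on A* × B* normalized by ω(u_A, u_B) = 1 that is not a convex combination of product states. -/

import Mathlib

structure ASS (V : Type*) [AddCommGroup V] [Module ℝ V] where
  pos : Set V
  add_mem : ∀ x ∈ pos, ∀ y ∈ pos, x + y ∈ pos
  smul_mem : ∀ (c : ℝ), 0 ≤ c → ∀ x ∈ pos, c • x ∈ pos
  generating : ∀ v : V, ∃ x ∈ pos, ∃ y ∈ pos, v = x - y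
  u : V →ₗ[ℝ] ℝ
  u_strict : ∀ x ∈ pos, x ≠ 0 → 0 < u x

variable {V W : Type*} [NormedAddCommGroup V] [NormedSpace ℝ V]
  [NormedAddCommGroup W] [NormedSpace ℝ W]

def dualCone (A : ASS V) : Set (Module.Dual ℝ V) := {f | ∀ x ∈ A.pos, 0 ≤ f x}

/-- The normalized states. -/
def stateSpace (A : ASS V) : Set V := {x ∈ A.pos | A.u x = 1}

def IsSimplex (Ω : Set V) : Prop :=
  ∃ s : Finset V, AffineIndependent ℝ (fun x : s => (x : V)) ∧
    Ω = convexHull ℝ (s : Set V)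

noncomputable def prodForm (α : V) (β : W) :
    Module.Dual ℝ V →ₗ[ℝ] Module.Dual ℝ W →ₗ[ℝ] ℝ :=
  LinearMap.mk₂ ℝ (fun a b => a α * b β)
    (fun a a' b => by simp [add_mul])
    (fun c a b => by simp [smul_eq_mul]; ring)
    (fun a b b' => by simp [mul_add])
    (fun c a b => by simp [smul_eq_mul]; ring)

/-!
Fix a cone that is not simplicial and identify functionals with vectors. Suppose first that the
cone contains a planar square and its dual contains another one, consisting of functionals which
vanish at the respective vertices of the first. Two such pairs of squares, one in each factor,
give a bilinear form in the spirit of the Popescu–Rohrlich box. It is nonnegative on pairs of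
positive functionals by a case distinction on four numbers, and its entanglement is detected by a
combination of these functionals which is nonnegative on product states.

Since the inequality detecting entanglement is strict, it is enough to have approximate squares,
whose pairing matrices converge to one with zero diagonal. They are found by induction on the
dimension. Approximate squares in an exposed face of the cone, or in the dual of an exposed face
of the dual cone, lift to the cone itself, so one may assume that all these faces are simplicial.
If an exposed ray `ξ` does not split off from a complementary vector, then a pair maximising the
bilinear form which measures this failure completes `ξ` to a square. If on the other hand there
are no approximate squares, then any two exposed rays lie in a common proper face, so there are
finitely many of them, and `ξ` together with vectors dual to the generators of the face of
functionals vanishing at `ξ` generates the cone, which is therefore simplicial.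
-/

namespace ConeEntanglement

open scoped RealInnerProductSpace

section Cone

variable {E : Type*} [NormedAddCommGroup E] [InnerProductSpace ℝ E]

section Basic

variable {C : ProperCone ℝ E} {f g h u x : E}

/-- The functional `⟪u, ·⟫` is positive on the nonzero vectors of `C`. -/
def StrictPos (C : ProperCone ℝ E) (u : E) : Prop := ∀ x ∈ C, x ≠ 0 → 0 < ⟪u, x⟫

theorem StrictPos.eq_zero (hu : StrictPos C u) (hx : x ∈ C) (h : ⟪u, x⟫ = 0) : x = 0 :=
  of_not_not fun h0 => (hu x hx h0).ne' h

theorem StrictPos.smul_mem_base (hu : StrictPos C u) (hx : x ∈ C) (h0 : x ≠ 0) :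
    ⟪u, x⟫⁻¹ • x ∈ {y ∈ C | ⟪u, y⟫ = 1} := by
  have hpos := hu x hx h0
  exact ⟨C.smul_mem hx (inv_nonneg.2 hpos.le), by
    rw [real_inner_smul_right, inv_mul_cancel₀ hpos.ne']⟩

theorem ne_zero_of_inner_pos (h : 0 < ⟪u, x⟫) : x ≠ 0 := by
  rintro rfl
  exact h.ne' (inner_zero_right u)

/-- The part of `C` orthogonal to `h`; it is an exposed face of `C` when `h ∈ dual C`. -/
noncomputable def face (C : ProperCone ℝ E) (h : E) : ProperCone ℝ E :=
  C ⊓ ProperCone.comap (innerSL ℝ h) ⊥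

theorem mem_face : x ∈ face C h ↔ x ∈ C ∧ ⟪h, x⟫ = 0 := Iff.rfl

variable [CompleteSpace E]

/-- The dual cone of `C`, realised in the same space through the inner product. -/
noncomputable def dual (C : ProperCone ℝ E) : ProperCone ℝ E := ProperCone.innerDual (C : Set E)

theorem mem_dual : f ∈ dual C ↔ ∀ x ∈ C, 0 ≤ ⟪f, x⟫ := by
  simp only [dual, ProperCone.mem_innerDual, SetLike.mem_coe, real_inner_comm]

@[simp]
theorem dual_dual : dual (dual C) = C := ProperCone.innerDual_innerDual C

theorem inner_nonneg (hf : f ∈ dual C) (hx : x ∈ C) : 0 ≤ ⟪f, x⟫ := mem_dual.1 hf x hx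

theorem mul_inner_le_inner {c : ℝ} (h : f - c • g ∈ dual C) (hx : x ∈ C) :
    c * ⟪g, x⟫ ≤ ⟪f, x⟫ := by
  simpa only [inner_sub_left, real_inner_smul_left, sub_nonneg] using inner_nonneg h hx

theorem mem_of_forall_dual (h : ∀ f ∈ dual C, 0 ≤ ⟪f, x⟫) : x ∈ C := by
  rw [← dual_dual (C := C), mem_dual]
  simpa only [real_inner_comm] using h

/-- A closed convex cone is regular if neither it nor its dual contains a line; in finite
dimension the second condition says that the cone spans the space. -/
structure IsRegular (C : ProperCone ℝ E) : Prop where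
  salient : ∀ x ∈ C, -x ∈ C → x = 0
  dual_salient : ∀ f ∈ dual C, -f ∈ dual C → f = 0

theorem IsRegular.dual (hC : IsRegular C) : IsRegular (dual C) where
  salient := hC.dual_salient
  dual_salient := by simpa only [dual_dual] using hC.salient

theorem IsRegular.ext (hC : IsRegular C) (h : ∀ x ∈ C, ⟪f, x⟫ = ⟪g, x⟫) : f = g := by
  refine sub_eq_zero.1 (hC.dual_salient _ ?_ ?_) <;> refine mem_dual.2 fun x hx => ?_
  · rw [inner_sub_left, h x hx, sub_self]
  · rw [inner_neg_left, inner_sub_left, h x hx, sub_self, neg_zero]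

theorem IsRegular.ext_of_dual (hC : IsRegular C) {y : E}
    (h : ∀ f ∈ ConeEntanglement.dual C, ⟪f, x⟫ = ⟪f, y⟫) : x = y :=
  hC.dual.ext fun f hf => by rw [real_inner_comm, h f hf, real_inner_comm]

theorem StrictPos.mem (hu : StrictPos C u) : u ∈ dual C := mem_dual.2 fun x hx => by
  rcases eq_or_ne x 0 with rfl | h0
  · rw [inner_zero_right]
  · exact (hu x hx h0).le

theorem strictPos_add (hf : f ∈ dual C) (hg : g ∈ dual C)
    (h : ∀ x ∈ C, ⟪f, x⟫ = 0 → ⟪g, x⟫ = 0 → x = 0) : StrictPos C (f + g) := by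
  intro x hx h0
  have hfx := inner_nonneg hf hx
  have hgx := inner_nonneg hg hx
  rw [inner_add_left]
  refine (add_nonneg hfx hgx).lt_of_ne' fun hsum => h0 ?_
  obtain ⟨hf0, hg0⟩ := (add_eq_zero_iff_of_nonneg hfx hgx).1 hsum
  exact h x hx hf0 hg0

theorem strictPos_dual_add {y : E} (hx : x ∈ C) (hy : y ∈ C)
    (h : ∀ f ∈ dual C, ⟪f, x⟫ = 0 → ⟪f, y⟫ = 0 → f = 0) : StrictPos (dual C) (x + y) :=
  strictPos_add (by rwa [dual_dual]) (by rwa [dual_dual])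
    (by simpa only [real_inner_comm] using h)

end Basic

section FiniteDimensional

variable [FiniteDimensional ℝ E] {C : ProperCone ℝ E} {u : E}

theorem StrictPos.exists_mul_norm_le (hu : StrictPos C u) :
    ∃ m : ℝ, 0 < m ∧ ∀ x ∈ C, m * ‖x‖ ≤ ⟪u, x⟫ := by
  obtain ⟨m, hm, hmin⟩ :=
    ((isCompact_sphere (0 : E) 1).inter_left C.isClosed).exists_forall_le'
      (f := fun x => ⟪u, x⟫) (a := 0) (by fun_prop)
      fun x hx => hu x hx.1 (ne_zero_of_mem_unit_sphere ⟨x, hx.2⟩)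
  refine ⟨m, hm, fun x hx => ?_⟩
  rcases eq_or_ne x 0 with rfl | h0
  · simp
  have hpos := norm_pos_iff.2 h0
  have h := hmin (‖x‖⁻¹ • x) ⟨C.smul_mem hx (inv_nonneg.2 hpos.le), by simp [norm_smul, h0]⟩
  rwa [real_inner_smul_right, ← div_eq_inv_mul, le_div_iff₀ hpos] at h

theorem StrictPos.isCompact_base (hu : StrictPos C u) : IsCompact {x ∈ C | ⟪u, x⟫ = 1} := by
  obtain ⟨m, hm, hle⟩ := hu.exists_mul_norm_le
  refine (isCompact_closedBall (0 : E) m⁻¹).of_isClosed_subset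
    (C.isClosed.inter (isClosed_eq (by fun_prop) continuous_const)) ?_
  rintro x ⟨hx, h1⟩
  rw [mem_closedBall_zero_iff, ← one_div, le_div_iff₀ hm, mul_comm, ← h1]
  exact hle x hx

theorem StrictPos.exists_sub_smul_mem (hu : StrictPos C u) (z : E) :
    ∃ δ : ℝ, 0 < δ ∧ u - δ • z ∈ dual C := by
  obtain ⟨m, hm, hle⟩ := hu.exists_mul_norm_le
  refine ⟨m / (‖z‖ + 1), by positivity, mem_dual.2 fun x hx => ?_⟩
  rw [inner_sub_left, real_inner_smul_left, sub_nonneg]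
  calc m / (‖z‖ + 1) * ⟪z, x⟫ ≤ m / (‖z‖ + 1) * ((‖z‖ + 1) * ‖x‖) := by
        gcongr
        exact (real_inner_le_norm z x).trans (by gcongr; simp)
    _ = m * ‖x‖ := by field_simp
    _ ≤ ⟪u, x⟫ := hle x hx

/-- A relative interior point of `G`, as an order unit of the span of `G`. -/
theorem exists_forall_smul_sub_mem (G : ProperCone ℝ E) :
    ∃ χ ∈ G, ∃ M : ℝ, 0 < M ∧ ∀ f ∈ G, (M * ‖f‖) • χ - f ∈ G := by
  obtain ⟨s, hsG, hspan⟩ := (Submodule.fg_span_iff_fg_span_finset_subset (R := ℝ) (G : Set E)).1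
    (IsNoetherian.noetherian _)
  let L := Fintype.linearCombination ℝ (fun i : s => (i : E))
  obtain ⟨coord, hcoord⟩ := L.rangeRestrict.exists_rightInverse_of_surjective L.range_rangeRestrict
  refine ⟨∑ i : s, (i : E), sum_mem fun i _ => hsG i.2,
    ‖LinearMap.toContinuousLinearMap coord‖ + 1, by positivity, fun f hf => ?_⟩
  have hrange : f ∈ LinearMap.range L := by
    rw [Fintype.range_linearCombination, Subtype.range_coe_subtype, Finset.setOfPred_mem, ← hspan]
    exact Submodule.subset_span hf
  have hsum : ∑ i : s, coord ⟨f, hrange⟩ i • (i : E) = f :=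
    congrArg Subtype.val (LinearMap.congr_fun hcoord ⟨f, hrange⟩)
  have hle (i : s) : coord ⟨f, hrange⟩ i ≤ (‖LinearMap.toContinuousLinearMap coord‖ + 1) * ‖f‖ :=
    calc coord ⟨f, hrange⟩ i ≤ ‖coord ⟨f, hrange⟩‖ :=
        (le_abs_self _).trans (norm_le_pi_norm (coord _) i)
      _ ≤ ‖LinearMap.toContinuousLinearMap coord‖ * ‖f‖ :=
        (LinearMap.toContinuousLinearMap coord).le_opNorm ⟨f, hrange⟩
      _ ≤ _ := by gcongr; simp
  have hdiff : ∑ i : s, ((‖LinearMap.toContinuousLinearMap coord‖ + 1) * ‖f‖ -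
      coord ⟨f, hrange⟩ i) • (i : E) ∈ G :=
    sum_mem fun i _ => G.smul_mem (hsG i.2) (sub_nonneg.2 (hle i))
  simpa only [sub_smul, Finset.sum_sub_distrib, ← Finset.smul_sum, hsum] using hdiff

theorem exists_strictPos (hC : ∀ x ∈ C, -x ∈ C → x = 0) : ∃ u, StrictPos C u := by
  obtain ⟨u, hu, M, -, hM⟩ := exists_forall_smul_sub_mem (dual C)
  refine ⟨u, fun x hx h0 => (inner_nonneg hu hx).lt_of_ne' fun hux => h0 (hC x hx ?_)⟩
  refine mem_of_forall_dual fun f hf => ?_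
  have h := inner_nonneg (hM f hf) hx
  rwa [inner_sub_left, real_inner_smul_left, hux, mul_zero, zero_sub, ← inner_neg_right] at h

theorem exists_add_mem_dual (hC : ∀ x ∈ C, -x ∈ C → x = 0) {h w : E} (hh : h ∈ dual C)
    (hw : w ∈ dual (face C h)) {ε : ℝ} (hε : 0 < ε) :
    ∃ v ∈ dual C, w + v ∈ dual C ∧ ∀ y ∈ face C h, ⟪v, y⟫ ≤ ε * ‖y‖ := by
  obtain ⟨u, hu⟩ := exists_strictPos hC
  set η := ε / (‖u‖ + 1)
  have hη : 0 < η := by positivity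
  have hηu : η • u ∈ dual C := (dual C).smul_mem hu.mem hη.le
  -- On the part of `C` where `w + η • u` is not already positive, `h` is bounded below.
  have hpos : StrictPos (C ⊓ .comap (innerSL ℝ (-(w + η • u))) (.positive ℝ ℝ)) h := fun x hx h0 =>
    (inner_nonneg hh hx.1).lt_of_ne' fun hhx => by
      have hneg : 0 ≤ ⟪-(w + η • u), x⟫ := hx.2
      have hwx := inner_nonneg hw (mem_face.2 ⟨hx.1, hhx⟩)
      have hux := mul_pos hη (hu x hx.1 h0)
      rw [inner_neg_left, inner_add_left, real_inner_smul_left] at hneg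
      linarith
  obtain ⟨m, hm, hle⟩ := hpos.exists_mul_norm_le
  refine ⟨(‖w‖ / m) • h + η • u, add_mem ((dual C).smul_mem hh (by positivity)) hηu,
    mem_dual.2 fun x hx => ?_, fun y hy => ?_⟩
  · have hhx := mul_nonneg (div_nonneg (norm_nonneg w) hm.le) (inner_nonneg hh hx)
    rw [add_left_comm, inner_add_left, real_inner_smul_left]
    rcases le_total 0 ⟪w + η • u, x⟫ with h0 | h0
    · exact add_nonneg hhx h0
    · have hhx' : ‖w‖ * ‖x‖ ≤ ‖w‖ / m * ⟪h, x⟫ := by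
        rw [div_mul_eq_mul_div, le_div_iff₀ hm, mul_assoc]
        gcongr
        rw [mul_comm]
        exact hle x ⟨hx, (neg_nonneg.2 h0).trans_eq (inner_neg_left _ _).symm⟩
      have hwx := (abs_le.1 (abs_real_inner_le_norm w x)).1
      have hux := inner_nonneg hηu hx
      rw [inner_add_left]
      linarith
  · rw [inner_add_left, real_inner_smul_left, (mem_face.1 hy).2, mul_zero, zero_add,
      real_inner_smul_left]
    calc η * ⟪u, y⟫ ≤ η * ((‖u‖ + 1) * ‖y‖) := by
          gcongr
          exact (real_inner_le_norm u y).trans (by gcongr; simp)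
      _ = ε * ‖y‖ := by simp only [η]; field_simp

theorem exists_forall_add_mem_dual (hC : ∀ x ∈ C, -x ∈ C → x = 0) {h : E} (hh : h ∈ dual C)
    {ι : Type*} [Finite ι] {w : ι → E} (hw : ∀ i, w i ∈ dual (face C h)) {ε : ℝ} (hε : 0 < ε) :
    ∃ v ∈ dual C, (∀ i, w i + v ∈ dual C) ∧ ∀ y ∈ face C h, ⟪v, y⟫ ≤ ε * ‖y‖ := by
  classical
  cases nonempty_fintype ι
  choose v hv hwv hvy using fun i => exists_add_mem_dual hC hh (hw i)
    (ε := ε / (Fintype.card ι + 1)) (by positivity)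
  refine ⟨∑ i, v i, sum_mem fun i _ => hv i, fun i => ?_, fun y hy => ?_⟩
  · rw [← Finset.add_sum_erase _ v (Finset.mem_univ i), ← add_assoc]
    exact add_mem (hwv i) (sum_mem fun j _ => hv j)
  · rw [sum_inner]
    calc ∑ i, ⟪v i, y⟫ ≤ ∑ _i : ι, ε / (Fintype.card ι + 1) * ‖y‖ :=
          Finset.sum_le_sum fun i _ => hvy i y hy
      _ = Fintype.card ι * (ε / (Fintype.card ι + 1)) * ‖y‖ := by
          rw [Finset.sum_const, Finset.card_univ, nsmul_eq_mul, mul_assoc]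
      _ ≤ ε * ‖y‖ := by
          gcongr
          rw [mul_div_assoc', div_le_iff₀ (by positivity)]
          nlinarith

end FiniteDimensional
end Cone

section Sandwich

variable {E : Type*} [NormedAddCommGroup E] [InnerProductSpace ℝ E]

section Complete

variable [CompleteSpace E] {C : ProperCone ℝ E} {δ : ℝ} {x f : Fin 4 → E}

/-- A square with vertices `x 0, x 1, x 2, x 3` in `C` together with a square `f` in the dual
cone, indexed cyclically. The last two conditions keep the edge sums `f 1 + f 2` and `f 2 + f 3`
uniformly away from the boundary of the dual cone. -/
structure Sandwich (C : ProperCone ℝ E) (δ : ℝ) (x f : Fin 4 → E) : Prop where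
  mem : ∀ i, x i ∈ C
  dual_mem : ∀ i, f i ∈ dual C
  rel : x 0 + x 2 = x 1 + x 3
  dual_rel : f 0 + f 2 = f 1 + f 3
  left_mem : f 1 + f 2 - δ • (f 0 + f 2) ∈ dual C
  right_mem : f 2 + f 3 - δ • (f 0 + f 2) ∈ dual C

/-- The pairing matrices `⟪f i, x j⟫` of the sandwiches in `C`. -/
def sandwichMatrices (C : ProperCone ℝ E) (δ : ℝ) : Set (Fin 4 → Fin 4 → ℝ) :=
  {P | ∃ x f, Sandwich C δ x f ∧ (fun i j => ⟪f i, x j⟫) = P}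

/-- `C` has sandwiches whose pairing matrices converge to a matrix with zero diagonal, as for
the vertices and edges of a square. The limit is taken in the matrix, not in the vectors, since
the vectors of an approximating sequence may be unbounded. -/
def HasSandwich (C : ProperCone ℝ E) : Prop :=
  ∃ δ : ℝ, 0 < δ ∧ δ ≤ 1 / 2 ∧
    ∃ A ∈ closure (sandwichMatrices C δ), (∀ i, A i i = 0) ∧ 0 < A 0 2

theorem Sandwich.mem_sandwichMatrices (h : Sandwich C δ x f) :
    (fun i j => ⟪f i, x j⟫) ∈ sandwichMatrices C δ := ⟨x, f, h, rfl⟩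

theorem Sandwich.reverse (h : Sandwich C δ x f) :
    Sandwich C δ (fun i => x (-i)) (fun i => f (-i)) where
  mem i := h.mem (-i)
  dual_mem i := h.dual_mem (-i)
  rel := h.rel.trans (add_comm _ _)
  dual_rel := h.dual_rel.trans (add_comm _ _)
  left_mem := by
    rw [add_comm]
    exact h.right_mem
  right_mem := by
    rw [add_comm]
    exact h.left_mem

theorem nonneg_of_mem_closure_sandwichMatrices {A : Fin 4 → Fin 4 → ℝ}
    (hA : A ∈ closure (sandwichMatrices C δ)) (i j : Fin 4) : 0 ≤ A i j := by
  refine closure_minimal (t := {P : Fin 4 → Fin 4 → ℝ | 0 ≤ P i j}) ?_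
    (isClosed_le (by fun_prop) (by fun_prop)) hA
  rintro _ ⟨x, f, h, rfl⟩
  exact inner_nonneg (h.dual_mem i) (h.mem j)

theorem row_of_mem_closure_sandwichMatrices {A : Fin 4 → Fin 4 → ℝ}
    (hA : A ∈ closure (sandwichMatrices C δ)) (i : Fin 4) : A i 0 + A i 2 = A i 1 + A i 3 := by
  refine closure_minimal (t := {P : Fin 4 → Fin 4 → ℝ | P i 0 + P i 2 = P i 1 + P i 3}) ?_
    (isClosed_eq (by fun_prop) (by fun_prop)) hA
  rintro _ ⟨x, f, h, rfl⟩
  simp only [Set.mem_ofPred_eq, ← inner_add_right, h.rel]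

theorem col_of_mem_closure_sandwichMatrices {A : Fin 4 → Fin 4 → ℝ}
    (hA : A ∈ closure (sandwichMatrices C δ)) (j : Fin 4) : A 0 j + A 2 j = A 1 j + A 3 j := by
  refine closure_minimal (t := {P : Fin 4 → Fin 4 → ℝ | P 0 j + P 2 j = P 1 j + P 3 j}) ?_
    (isClosed_eq (by fun_prop) (by fun_prop)) hA
  rintro _ ⟨x, f, h, rfl⟩
  simp only [Set.mem_ofPred_eq, ← inner_add_left, h.dual_rel]

theorem reverse_mem_closure_sandwichMatrices {A : Fin 4 → Fin 4 → ℝ}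
    (hA : A ∈ closure (sandwichMatrices C δ)) :
    (fun i j => A (-i) (-j)) ∈ closure (sandwichMatrices C δ) := by
  refine map_mem_closure (f := fun (P : Fin 4 → Fin 4 → ℝ) i j => P (-i) (-j)) (by fun_prop) hA ?_
  rintro _ ⟨x, f, h, rfl⟩
  exact h.reverse.mem_sandwichMatrices

theorem HasSandwich.of_subset_closure {F : Type*} [NormedAddCommGroup F] [InnerProductSpace ℝ F]
    [CompleteSpace F] {K : ProperCone ℝ F} (hK : HasSandwich K)
    (h : ∀ δ ≤ (1 / 2 : ℝ), sandwichMatrices K δ ⊆ closure (sandwichMatrices C δ)) :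
    HasSandwich C := by
  obtain ⟨δ, hδ, hδ2, A, hA, hdiag, hpos⟩ := hK
  exact ⟨δ, hδ, hδ2, A, closure_minimal (h δ hδ2) isClosed_closure hA, hdiag, hpos⟩

theorem sandwichMatrices_subset_of_linearIsometry {F : Type*} [NormedAddCommGroup F]
    [InnerProductSpace ℝ F] [CompleteSpace F] {K : ProperCone ℝ F} (T : F →ₗᵢ[ℝ] E)
    (hT : ∀ y ∈ K, T y ∈ C) (hT' : ∀ g ∈ dual K, T g ∈ dual C) (δ : ℝ) :
    sandwichMatrices K δ ⊆ sandwichMatrices C δ := by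
  rintro _ ⟨y, g, h, rfl⟩
  refine ⟨T ∘ y, T ∘ g, ⟨fun i => hT _ (h.mem i), fun i => hT' _ (h.dual_mem i), ?_, ?_, ?_, ?_⟩,
    ?_⟩
  · simpa using congrArg T h.rel
  · simpa using congrArg T h.dual_rel
  · simpa using hT' _ h.left_mem
  · simpa using hT' _ h.right_mem
  · simp

end Complete

section FiniteDimensional

variable [FiniteDimensional ℝ E] {C : ProperCone ℝ E} {δ : ℝ} {x f : Fin 4 → E}

theorem hasSandwich_of_strictPos (hx : ∀ i, x i ∈ C) (hf : ∀ i, f i ∈ dual C)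
    (hxr : x 0 + x 2 = x 1 + x 3) (hfr : f 0 + f 2 = f 1 + f 3) (hl : StrictPos C (f 1 + f 2))
    (hr : StrictPos C (f 2 + f 3)) (hdiag : ∀ i, ⟪f i, x i⟫ = 0) (hpos : 0 < ⟪f 0, x 2⟫) :
    HasSandwich C := by
  have hz : f 0 + f 2 ∈ dual C := add_mem (hf 0) (hf 2)
  have hmono {v : E} {δ δ' : ℝ} (hv : v - δ' • (f 0 + f 2) ∈ dual C) (h : δ ≤ δ') :
      v - δ • (f 0 + f 2) ∈ dual C := by
    convert add_mem hv ((dual C).smul_mem hz (sub_nonneg.2 h)) using 1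
    module
  obtain ⟨δ₁, hδ₁, h₁⟩ := hl.exists_sub_smul_mem (f 0 + f 2)
  obtain ⟨δ₂, hδ₂, h₂⟩ := hr.exists_sub_smul_mem (f 0 + f 2)
  have hS : Sandwich C (min (min δ₁ δ₂) (1 / 2)) x f :=
    ⟨hx, hf, hxr, hfr, hmono h₁ (min_le_of_left_le (min_le_left _ _)),
      hmono h₂ (min_le_of_left_le (min_le_right _ _))⟩
  exact ⟨_, by positivity, min_le_right _ _, _, subset_closure hS.mem_sandwichMatrices,
    hdiag, hpos⟩

theorem mem_closure_of_forall_pairing_le {S : Set (Fin 4 → Fin 4 → ℝ)} {P : Fin 4 → Fin 4 → ℝ}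
    (c : ℝ) (h : ∀ ε > 0, ∃ Q ∈ S, ∀ i j, |Q i j - P i j| ≤ ε * c) : P ∈ closure S := by
  refine Metric.mem_closure_iff.2 fun ε hε => ?_
  obtain ⟨Q, hQ, hle⟩ := h (ε / (|c| + 1)) (by positivity)
  refine ⟨Q, hQ, (dist_pi_lt_iff hε).2 fun i => (dist_pi_lt_iff hε).2 fun j => ?_⟩
  rw [dist_comm, Real.dist_eq]
  calc |Q i j - P i j| ≤ ε / (|c| + 1) * |c| := (hle i j).trans (by gcongr; exact le_abs_self c)
    _ < ε := by
      rw [div_mul_eq_mul_div, div_lt_iff₀ (by positivity)]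
      nlinarith

theorem sandwichMatrices_face_subset_closure (hC : ∀ x ∈ C, -x ∈ C → x = 0) {h : E}
    (hh : h ∈ dual C) (hδ : δ ≤ 1 / 2) :
    sandwichMatrices (face C h) δ ⊆ closure (sandwichMatrices C δ) := by
  rintro _ ⟨x, f, hxf, rfl⟩
  refine mem_closure_of_forall_pairing_le ‖x‖ fun ε hε => ?_
  obtain ⟨v, hv, hfv, hvx⟩ := exists_forall_add_mem_dual hC hh
    (w := Sum.elim f ![f 1 + f 2 - δ • (f 0 + f 2), f 2 + f 3 - δ • (f 0 + f 2)])
    (Sum.forall.2 ⟨hxf.dual_mem, Fin.forall_fin_two.2 ⟨hxf.left_mem, hxf.right_mem⟩⟩) hε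
  have hadd {l : E} (hl : l + v ∈ dual C) : l + (1 - 2 * δ) • v + v ∈ dual C := by
    convert add_mem hl ((dual C).smul_mem hv (by linarith : (0 : ℝ) ≤ 1 - 2 * δ)) using 1
    module
  refine ⟨_, (⟨fun i => (hxf.mem i).1, fun i => hfv (.inl i), hxf.rel, ?_, ?_, ?_⟩ :
    Sandwich C δ x (fun i => f i + v)).mem_sandwichMatrices, fun i j => ?_⟩
  · linear_combination (norm := module) hxf.dual_rel
  · convert hadd (l := f 1 + f 2 - δ • (f 0 + f 2)) (hfv (.inr 0)) using 1
    module
  · convert hadd (l := f 2 + f 3 - δ • (f 0 + f 2)) (hfv (.inr 1)) using 1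
    module
  · rw [inner_add_left, add_sub_cancel_left, abs_of_nonneg (inner_nonneg hv (hxf.mem j).1)]
    exact (hvx _ (hxf.mem j)).trans (by gcongr; exact norm_le_pi_norm x j)

theorem sandwichMatrices_dual_face_subset_closure (hC : ∀ f ∈ dual C, -f ∈ dual C → f = 0) {ξ : E}
    (hξ : ξ ∈ C) (δ : ℝ) :
    sandwichMatrices (dual (face (dual C) ξ)) δ ⊆ closure (sandwichMatrices C δ) := by
  rintro _ ⟨x, f, hxf, rfl⟩
  refine mem_closure_of_forall_pairing_le ‖f‖ fun ε hε => ?_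
  have hsub {g : E} (hg : g ∈ dual (dual (face (dual C) ξ))) : g ∈ face (dual C) ξ := by
    rwa [dual_dual] at hg
  obtain ⟨v, hv, hxv, hvf⟩ := exists_forall_add_mem_dual hC
    (by rwa [dual_dual]) hxf.mem hε
  rw [dual_dual] at hv hxv
  refine ⟨_, (⟨hxv, fun i => (hsub (hxf.dual_mem i)).1, ?_, hxf.dual_rel, (hsub hxf.left_mem).1,
    (hsub hxf.right_mem).1⟩ : Sandwich C δ (fun i => x i + v) f).mem_sandwichMatrices,
    fun i j => ?_⟩
  · linear_combination (norm := module) hxf.rel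
  · have hfi := hsub (hxf.dual_mem i)
    rw [inner_add_right, add_sub_cancel_left, abs_of_nonneg (inner_nonneg hfi.1 hv),
      real_inner_comm]
    exact (hvf _ hfi).trans (by gcongr; exact norm_le_pi_norm f i)

end FiniteDimensional
end Sandwich

section RaySplitting

variable {E : Type*} [NormedAddCommGroup E] [InnerProductSpace ℝ E]

section Complete

variable [CompleteSpace E] {C : ProperCone ℝ E} {ξ χ φ η : E}

/-- `ξ` spans an extreme ray of `C` which is exposed by `χ`: it is the zero set of `⟪χ, ·⟫`
in `C`. -/
structure Exposes (C : ProperCone ℝ E) (ξ χ : E) : Prop where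
  mem : ξ ∈ C
  ne_zero : ξ ≠ 0
  dual_mem : χ ∈ dual C
  inner_eq_zero : ⟪χ, ξ⟫ = 0
  exists_eq_smul : ∀ x ∈ C, ⟪χ, x⟫ = 0 → ∃ c : ℝ, 0 ≤ c ∧ x = c • ξ

/-- Data that would split the exposed ray `ξ` off the cone: `φ` is a coordinate along `ξ`, the
vector `η` complements `ξ` to an interior point of `C`, and `χ` is normalised to dominate all
dual vectors vanishing at `ξ`. -/
structure RayComplement (C : ProperCone ℝ E) (ξ χ φ η : E) : Prop where
  exposes : Exposes C ξ χ
  coord_mem : φ ∈ dual C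
  compl_mem : η ∈ C
  coord_compl : ⟪φ, η⟫ = 0
  coord_ray : ⟪φ, ξ⟫ = 1
  strictPos : StrictPos (dual C) (ξ + η)
  dominates : ∀ f ∈ face (dual C) ξ, ∀ x ∈ C, ⟪f, x⟫ ≤ ⟪f, η⟫ * ⟪χ, x⟫

theorem smul_coord_add_sub_mem_dual {t M : ℝ} {f : E}
    (hmax : ∀ y ∈ C, ⟪f, y⟫ - ⟪φ, y⟫ * ⟪f, ξ⟫ ≤ M * (⟪χ, y⟫ + t * ⟪φ, y⟫)) :
    (M * t + ⟪f, ξ⟫) • φ + M • χ - f ∈ dual C := mem_dual.2 fun y hy => by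
  have hy := hmax y hy
  simp only [inner_sub_left, inner_add_left, real_inner_smul_left]
  linarith

theorem smul_compl_add_sub_mem {t M : ℝ} {x : E}
    (hmax : ∀ g ∈ dual C, ⟪g, x⟫ - ⟪φ, x⟫ * ⟪g, ξ⟫ ≤ M * (⟪g, η⟫ + t * ⟪g, ξ⟫)) :
    M • η + (M * t + ⟪φ, x⟫) • ξ - x ∈ C := mem_of_forall_dual fun g hg => by
  have hg := hmax g hg
  simp only [inner_sub_right, inner_add_right, real_inner_smul_right]
  linarith

end Complete

theorem exists_forall_inner_map_le {F : Type*} [NormedAddCommGroup F] [InnerProductSpace ℝ F]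
    [FiniteDimensional ℝ E] [FiniteDimensional ℝ F] {C : ProperCone ℝ E} {K : ProperCone ℝ F}
    (T : E →ₗ[ℝ] F) {z x₀ : E} {p f₀ : F} (hz : StrictPos C z) (hp : StrictPos K p)
    (hx₀ : x₀ ∈ C) (hf₀ : f₀ ∈ K) {M₀ : ℝ} (hM₀ : M₀ * ⟪p, f₀⟫ * ⟪z, x₀⟫ < ⟪f₀, T x₀⟫) :
    ∃ x ∈ C, ∃ f ∈ K, ⟪z, x⟫ = 1 ∧ ⟪p, f⟫ = 1 ∧ M₀ < ⟪f, T x⟫ ∧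
      ∀ y ∈ C, ∀ g ∈ K, ⟪g, T y⟫ ≤ ⟪f, T x⟫ * ⟪p, g⟫ * ⟪z, y⟫ := by
  have hscale {y : E} {g : F} :
      ⟪⟪p, g⟫⁻¹ • g, T (⟪z, y⟫⁻¹ • y)⟫ = ⟪g, T y⟫ / (⟪p, g⟫ * ⟪z, y⟫) := by
    rw [map_smul, real_inner_smul_left, real_inner_smul_right]
    ring
  have hx₀0 : x₀ ≠ 0 := by
    rintro rfl
    simp at hM₀
  have hf₀0 : f₀ ≠ 0 := by
    rintro rfl
    simp at hM₀
  obtain ⟨⟨x, f⟩, ⟨⟨hx, hzx⟩, hf, hpf⟩, hmax⟩ :=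
    (hz.isCompact_base.prod hp.isCompact_base).exists_isMaxOn
      ⟨(_, _), hz.smul_mem_base hx₀ hx₀0, hp.smul_mem_base hf₀ hf₀0⟩
      (f := fun q => ⟪q.2, T q.1⟫) (by have := T.continuous_of_finiteDimensional; fun_prop)
  have hle {y : E} (hy : y ∈ C) (hy0 : y ≠ 0) {g : F} (hg : g ∈ K) (hg0 : g ≠ 0) :
      ⟪g, T y⟫ ≤ ⟪f, T x⟫ * (⟪p, g⟫ * ⟪z, y⟫) := by
    rw [← div_le_iff₀ (mul_pos (hp g hg hg0) (hz y hy hy0)), ← hscale]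
    exact hmax (a := (_, _)) ⟨hz.smul_mem_base hy hy0, hp.smul_mem_base hg hg0⟩
  refine ⟨x, hx, f, hf, hzx, hpf, ?_, fun y hy g hg => ?_⟩
  · rw [mul_assoc] at hM₀
    exact lt_of_mul_lt_mul_right (hM₀.trans_le (hle hx₀ hx₀0 hf₀ hf₀0))
      (mul_pos (hp _ hf₀ hf₀0) (hz _ hx₀ hx₀0)).le
  · rcases eq_or_ne y 0 with rfl | hy0
    · simp
    rcases eq_or_ne g 0 with rfl | hg0
    · simp
    rw [mul_assoc]
    exact hle hy hy0 hg hg0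

namespace RayComplement

variable [FiniteDimensional ℝ E] {C : ProperCone ℝ E} {ξ χ φ η : E}

theorem strictPos_exposing_add (h : RayComplement C ξ χ φ η) {t : ℝ} (ht : 0 < t) :
    StrictPos C (χ + t • φ) := by
  refine strictPos_add h.exposes.dual_mem ((dual C).smul_mem h.coord_mem ht.le)
    fun x hx hχ hφ => ?_
  obtain ⟨c, -, rfl⟩ := h.exposes.exists_eq_smul x hx hχ
  rw [real_inner_smul_left, real_inner_smul_right, h.coord_ray, mul_one] at hφ
  rw [(mul_eq_zero.1 hφ).resolve_left ht.ne', zero_smul]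

theorem strictPos_compl_add (h : RayComplement C ξ χ φ η) {t : ℝ} (ht : 0 < t) :
    StrictPos (dual C) (η + t • ξ) := by
  refine strictPos_dual_add h.compl_mem (C.smul_mem h.exposes.mem ht.le) fun f hf hη hξ => ?_
  rw [real_inner_smul_right] at hξ
  refine h.strictPos.eq_zero hf ?_
  rw [real_inner_comm, inner_add_right, hη, (mul_eq_zero.1 hξ).resolve_left ht.ne', add_zero]

theorem inner_pos_of_isMax (h : RayComplement C ξ χ φ η) {t M : ℝ} (ht : 0 < t) {x f : E}
    (hx : x ∈ C) (hf : f ∈ dual C) (hzx : ⟪χ, x⟫ + t * ⟪φ, x⟫ = 1)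
    (hpf : ⟪f, η⟫ + t * ⟪f, ξ⟫ = 1) (hM : 1 < M) (hfx : ⟪f, x⟫ - ⟪φ, x⟫ * ⟪f, ξ⟫ = M) :
    0 < ⟪f, ξ⟫ := by
  refine (inner_nonneg hf h.exposes.mem).lt_of_ne' fun hfξ => ?_
  rw [hfξ, mul_zero, add_zero] at hpf
  rw [hfξ, mul_zero, sub_zero] at hfx
  have hdom := h.dominates f (mem_face.2 ⟨hf, by rw [real_inner_comm, hfξ]⟩) x hx
  have hφ := mul_nonneg ht.le (inner_nonneg h.coord_mem hx)
  rw [hpf, one_mul] at hdom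
  linarith

theorem strictPos_add_exposing (h : RayComplement C ξ χ φ η) {f : E} (hf : f ∈ dual C)
    (hfξ : 0 < ⟪f, ξ⟫) {M : ℝ} (hM : 0 < M) : StrictPos C (f + M • χ) := by
  refine strictPos_add hf ((dual C).smul_mem h.exposes.dual_mem hM.le) fun x hx hf0 hχ => ?_
  rw [real_inner_smul_left] at hχ
  obtain ⟨c, -, rfl⟩ := h.exposes.exists_eq_smul x hx ((mul_eq_zero.1 hχ).resolve_left hM.ne')
  rw [real_inner_smul_right] at hf0
  rw [(mul_eq_zero.1 hf0).resolve_right hfξ.ne', zero_smul]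

/-- The hypotheses say that the form `⟪g, y⟫ - ⟪φ, y⟫ * ⟪g, ξ⟫` attains its maximum `M` over
normalised pairs at `(f, x)`. Then `x 1` and `f 3` below are positive by maximality, and the
diagonal vanishes because the maximum is attained. -/
theorem hasSandwich_of_isMax (h : RayComplement C ξ χ φ η) {t M : ℝ} (ht : 0 < t) {x f : E}
    (hx : x ∈ C) (hf : f ∈ dual C) (hzx : ⟪χ, x⟫ + t * ⟪φ, x⟫ = 1)
    (hpf : ⟪f, η⟫ + t * ⟪f, ξ⟫ = 1) (hM : 1 < M) (hfx : ⟪f, x⟫ - ⟪φ, x⟫ * ⟪f, ξ⟫ = M)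
    (hmax : ∀ y ∈ C, ∀ g ∈ dual C, ⟪g, y⟫ - ⟪φ, y⟫ * ⟪g, ξ⟫ ≤
      M * (⟪g, η⟫ + t * ⟪g, ξ⟫) * (⟪χ, y⟫ + t * ⟪φ, y⟫)) :
    HasSandwich C := by
  have hM0 : 0 < M := by linarith
  have hMt : 0 < M * t := mul_pos hM0 ht
  have hfξ := h.inner_pos_of_isMax ht hx hf hzx hpf hM hfx
  have hφx := inner_nonneg h.coord_mem hx
  have hξ := h.exposes.mem
  have hf₃ := smul_coord_add_sub_mem_dual fun y hy => by
    simpa only [hpf, mul_one] using hmax y hy f hf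
  have hx₁ := smul_compl_add_sub_mem fun g hg => by
    simpa only [hzx, mul_one] using hmax x hx g hg
  have hr := h.strictPos_add_exposing hf₃ (by
    simp only [inner_sub_left, inner_add_left, real_inner_smul_left, h.coord_ray,
      h.exposes.inner_eq_zero]
    linarith) hM0
  refine hasSandwich_of_strictPos
    (x := ![M • η, M • η + (M * t + ⟪φ, x⟫) • ξ - x, (M * t + ⟪φ, x⟫) • ξ, x])
    (f := ![(M * t + ⟪f, ξ⟫) • φ, f, M • χ, (M * t + ⟪f, ξ⟫) • φ + M • χ - f]) ?_ ?_
    (sub_add_cancel _ _).symm (add_sub_cancel _ _).symm (h.strictPos_add_exposing hf hfξ hM0)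
    (by rwa [add_comm] at hr) ?_ ?_
  · simp only [Fin.forall_fin_succ]
    exact ⟨C.smul_mem h.compl_mem hM0.le, hx₁, C.smul_mem hξ (by positivity), hx, nofun⟩
  · simp only [Fin.forall_fin_succ]
    exact ⟨(dual C).smul_mem h.coord_mem (by positivity), hf,
      (dual C).smul_mem h.exposes.dual_mem hM0.le, hf₃, nofun⟩
  · simp only [Fin.forall_fin_succ]
    refine ⟨(?_ : ⟪(M * t + ⟪f, ξ⟫) • φ, M • η⟫ = 0),
      (?_ : ⟪f, M • η + (M * t + ⟪φ, x⟫) • ξ - x⟫ = 0),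
      (?_ : ⟪M • χ, (M * t + ⟪φ, x⟫) • ξ⟫ = 0),
      (?_ : ⟪(M * t + ⟪f, ξ⟫) • φ + M • χ - f, x⟫ = 0), nofun⟩ <;>
      simp only [inner_sub_left, inner_add_left, inner_sub_right, inner_add_right,
        real_inner_smul_left, real_inner_smul_right, h.coord_compl, h.exposes.inner_eq_zero,
        mul_zero]
    · linear_combination M * hpf - hfx
    · linear_combination M * hzx - hfx
  · have hpos : 0 < (M * t + ⟪φ, x⟫) * (M * t + ⟪f, ξ⟫) := by positivity
    simpa [real_inner_smul_left, real_inner_smul_right, h.coord_ray] using hpos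

theorem inner_le (h : RayComplement C ξ χ φ η) (hC : ¬ HasSandwich C) {x f : E} (hx : x ∈ C)
    (hf : f ∈ dual C) : ⟪f, x⟫ ≤ ⟪φ, x⟫ * ⟪f, ξ⟫ + ⟪χ, x⟫ * ⟪f, η⟫ := by
  have hle {t : ℝ} (ht : 0 < t) : ⟪f, x⟫ - ⟪φ, x⟫ * ⟪f, ξ⟫ ≤
      (⟪f, η⟫ + t * ⟪f, ξ⟫) * (⟪χ, x⟫ + t * ⟪φ, x⟫) := by
    by_contra! hlt
    let T : E →ₗ[ℝ] E := LinearMap.id - (innerₗ E φ).smulRight ξ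
    have hT (g y : E) : ⟪g, T y⟫ = ⟪g, y⟫ - ⟪φ, y⟫ * ⟪g, ξ⟫ := by
      simp [T, inner_sub_right, real_inner_smul_right]
    have hz (y : E) : ⟪χ + t • φ, y⟫ = ⟪χ, y⟫ + t * ⟪φ, y⟫ := by
      rw [inner_add_left, real_inner_smul_left]
    have hp (g : E) : ⟪η + t • ξ, g⟫ = ⟪g, η⟫ + t * ⟪g, ξ⟫ := by
      rw [real_inner_comm, inner_add_right, real_inner_smul_right]
    obtain ⟨x', hx', f', hf', hzx, hpf, hM, hmax⟩ := exists_forall_inner_map_le T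
      (h.strictPos_exposing_add ht) (h.strictPos_compl_add ht) hx hf (M₀ := 1)
      (by rwa [one_mul, hp, hz, hT])
    simp only [hT, hz, hp] at hzx hpf hM hmax
    exact hC (h.hasSandwich_of_isMax ht hx' hf' hzx hpf hM rfl hmax)
  have hlim : Filter.Tendsto (fun t : ℝ => (⟪f, η⟫ + t * ⟪f, ξ⟫) * (⟪χ, x⟫ + t * ⟪φ, x⟫))
      (nhdsWithin 0 (Set.Ioi 0)) (nhds (⟪f, η⟫ * ⟪χ, x⟫)) :=
    tendsto_nhdsWithin_of_tendsto_nhds (by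
      have hcont : Continuous fun t : ℝ => (⟪f, η⟫ + t * ⟪f, ξ⟫) * (⟪χ, x⟫ + t * ⟪φ, x⟫) := by
        fun_prop
      simpa using hcont.tendsto 0)
  have hle₀ := ge_of_tendsto hlim (eventually_nhdsWithin_of_forall fun t ht => hle ht)
  linarith

end RayComplement
end RaySplitting

section Simplicial

theorem mem_hull_range_iff {E ι : Type*} [AddCommMonoid E] [Module ℝ E] [Fintype ι] {e : ι → E}
    {x : E} : x ∈ PointedCone.hull ℝ (Set.range e) ↔
      ∃ c : ι → ℝ, (∀ i, 0 ≤ c i) ∧ ∑ i, c i • e i = x := by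
  rw [PointedCone.hull, Submodule.mem_span_range_iff_exists_fun]
  exact ⟨fun ⟨c, hc⟩ => ⟨fun i => c i, fun i => (c i).2, hc⟩,
    fun ⟨c, hc, hx⟩ => ⟨fun i => ⟨c i, hc i⟩, hx⟩⟩

theorem exists_finset_of_isSimplicial {E : Type*} [AddCommMonoid E] [Module ℝ E]
    {C : PointedCone ℝ E} (hC : C.IsSimplicial) :
    ∃ s : Finset E, LinearIndependent ℝ ((↑) : s → E) ∧ (∀ i : s, (i : E) ∈ C) ∧
      ∀ x ∈ C, ∃ c : s → ℝ, (∀ i, 0 ≤ c i) ∧ ∑ i, c i • (i : E) = x := by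
  obtain ⟨s, hs, hli, rfl⟩ := hC
  lift s to Finset E using hs
  refine ⟨s, hli, fun i => PointedCone.subset_hull i.2, fun x hx => ?_⟩
  rw [← mem_hull_range_iff, Subtype.range_coe_subtype]
  exact hx

variable {E : Type*} [NormedAddCommGroup E] [InnerProductSpace ℝ E] [CompleteSpace E]
  {C : ProperCone ℝ E}

theorem isSimplicial_of_biorthogonal {ι : Type*} [Fintype ι] [DecidableEq ι] {e l : ι → E}
    (he : ∀ i, e i ∈ C) (hl : ∀ i, l i ∈ dual C)
    (hle : ∀ i j, ⟪l i, e j⟫ = if i = j then (1 : ℝ) else 0)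
    (hsum : ∀ x ∈ C, ∑ i, ⟪l i, x⟫ • e i = x) : (C : PointedCone ℝ E).IsSimplicial := by
  refine ⟨Set.range e, Set.finite_range e, LinearIndependent.linearIndepOn_id ?_,
    SetLike.ext fun x => ?_⟩
  · refine Fintype.linearIndependent_iff.2 fun c hc i => ?_
    simpa [inner_sum, real_inner_smul_right, hle] using congrArg (⟪l i, ·⟫) hc
  · rw [mem_hull_range_iff]
    refine ⟨?_, fun hx => ⟨fun i => ⟪l i, x⟫, fun i => inner_nonneg (hl i) hx, hsum x hx⟩⟩
    rintro ⟨c, hc, rfl⟩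
    exact sum_mem fun i _ => C.smul_mem (he i) (hc i)

theorem Exposes.isSimplicial {ξ : E} (h : Exposes C ξ 0) :
    (C : PointedCone ℝ E).IsSimplicial := by
  have hξ : ⟪ξ, ξ⟫ ≠ 0 := inner_self_ne_zero.2 h.ne_zero
  have hray {x : E} (hx : x ∈ C) : ∃ c : ℝ, 0 ≤ c ∧ x = c • ξ :=
    h.exists_eq_smul x hx (inner_zero_left x)
  refine isSimplicial_of_biorthogonal (ι := Unit) (e := fun _ => ξ) (l := fun _ => ⟪ξ, ξ⟫⁻¹ • ξ)
    (fun _ => h.mem) (fun _ => mem_dual.2 fun x hx => ?_) (fun _ _ => ?_) fun x hx => ?_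
  · obtain ⟨c, hc, rfl⟩ := hray hx
    rwa [real_inner_smul_left, real_inner_smul_right, mul_left_comm, inv_mul_cancel₀ hξ, mul_one]
  · rw [real_inner_smul_left, inv_mul_cancel₀ hξ, if_pos rfl]
  · obtain ⟨c, -, rfl⟩ := hray hx
    rw [Fintype.sum_unique, real_inner_smul_left, real_inner_smul_right, mul_left_comm,
      inv_mul_cancel₀ hξ, mul_one]

end Simplicial

section Rays

variable {E : Type*} [NormedAddCommGroup E] [InnerProductSpace ℝ E] [FiniteDimensional ℝ E]
  {C : ProperCone ℝ E} {ξ χ φ η : E}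

theorem RayComplement.eq_smul (h : RayComplement C ξ χ φ η) (hC : IsRegular C)
    (hns : ¬ HasSandwich C) {f : E} (hf : f ∈ dual C) (hfη : ⟪f, η⟫ = 0) : f = ⟪f, ξ⟫ • φ := by
  rcases eq_or_ne f 0 with rfl | hf0
  · rw [inner_zero_left, zero_smul]
  have hfξ : 0 < ⟪f, ξ⟫ := by
    have hpos := h.strictPos f hf hf0
    rwa [real_inner_comm, inner_add_right, hfη, add_zero] at hpos
  have hnormalised : RayComplement C ξ χ (⟪f, ξ⟫⁻¹ • f) η :=
    { h with
      coord_mem := (dual C).smul_mem hf (by positivity)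
      coord_compl := by rw [real_inner_smul_left, hfη, mul_zero]
      coord_ray := by rw [real_inner_smul_left, inv_mul_cancel₀ hfξ.ne'] }
  refine hC.ext fun x hx => le_antisymm ?_ ?_
  · have hle := h.inner_le hns hx hf
    rw [hfη] at hle
    rw [real_inner_smul_left]
    linarith
  · have hle := hnormalised.inner_le hns hx h.coord_mem
    rw [h.coord_ray, h.coord_compl, real_inner_smul_left, mul_one, mul_zero, add_zero,
      le_inv_mul_iff₀ hfξ] at hle
    rwa [real_inner_smul_left]

theorem exists_complement (hC : IsRegular C) (hξ : ξ ∈ C) (hξ0 : ξ ≠ 0) :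
    ∃ φ ∈ dual C, ∃ η ∈ C, ⟪φ, η⟫ = 0 ∧ ⟪φ, ξ⟫ = 1 ∧ StrictPos (dual C) (ξ + η) := by
  obtain ⟨p, hp⟩ := exists_strictPos hC.dual_salient
  obtain ⟨f₀, hf₀, hf₀ξ⟩ : ∃ f ∈ dual C, 0 < ⟪f, ξ⟫ := by
    by_contra! hle
    refine hξ0 (hC.salient ξ hξ (mem_of_forall_dual fun f hf => ?_))
    rw [inner_neg_right]
    exact neg_nonneg.2 (hle f hf)
  have hf₀0 : f₀ ≠ 0 := by
    rintro rfl
    simp at hf₀ξ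
  obtain ⟨φ, ⟨hφ, hpφ⟩, hmax⟩ := hp.isCompact_base.exists_isMaxOn
    ⟨_, hp.smul_mem_base hf₀ hf₀0⟩ (f := fun f => ⟪f, ξ⟫) (by fun_prop)
  have hle {f : E} (hf : f ∈ dual C) : ⟪f, ξ⟫ ≤ ⟪φ, ξ⟫ * ⟪p, f⟫ := by
    rcases eq_or_ne f 0 with rfl | hf0
    · simp
    have h : ⟪⟪p, f⟫⁻¹ • f, ξ⟫ ≤ ⟪φ, ξ⟫ := hmax (hp.smul_mem_base hf hf0)
    rwa [real_inner_smul_left, inv_mul_le_iff₀ (hp f hf hf0), mul_comm] at h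
  have hs : 0 < ⟪φ, ξ⟫ := pos_of_mul_pos_left (hf₀ξ.trans_le (hle hf₀)) (hp f₀ hf₀ hf₀0).le
  have hη : p - ⟪φ, ξ⟫⁻¹ • ξ ∈ C := mem_of_forall_dual fun f hf => by
    rw [inner_sub_right, real_inner_smul_right, sub_nonneg, inv_mul_le_iff₀ hs,
      real_inner_comm p f]
    exact hle hf
  refine ⟨⟪φ, ξ⟫⁻¹ • φ, (dual C).smul_mem hφ (by positivity), p - ⟪φ, ξ⟫⁻¹ • ξ, hη, ?_, ?_,
    strictPos_dual_add hξ hη fun f hf hfξ hfη => hp.eq_zero hf ?_⟩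
  · rw [real_inner_smul_left, inner_sub_right, real_inner_smul_right, inv_mul_cancel₀ hs.ne',
      real_inner_comm p φ, hpφ, sub_self, mul_zero]
  · rw [real_inner_smul_left, inv_mul_cancel₀ hs.ne']
  · rwa [inner_sub_right, real_inner_smul_right, hfξ, mul_zero, sub_zero, real_inner_comm] at hfη

theorem exists_rayComplement (hξ : Exposes C ξ χ) (hφ : φ ∈ dual C) (hη : η ∈ C)
    (hφη : ⟪φ, η⟫ = 0) (hφξ : ⟪φ, ξ⟫ = 1) (hpos : StrictPos (dual C) (ξ + η)) :
    ∃ χ', RayComplement C ξ χ' φ η := by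
  obtain ⟨χ₁, hχ₁, M, hM, hle⟩ := exists_forall_smul_sub_mem (face (dual C) ξ)
  obtain ⟨m, hm, hnorm⟩ := hpos.exists_mul_norm_le
  have hdom {f x : E} (hf : f ∈ face (dual C) ξ) (hx : x ∈ C) :
      ⟪f, x⟫ ≤ M * ‖f‖ * ⟪χ₁, x⟫ := by
    have h := inner_nonneg (hle f hf).1 hx
    rwa [inner_sub_left, real_inner_smul_left, sub_nonneg] at h
  refine ⟨(M / m) • χ₁, ⟨hξ.mem, hξ.ne_zero, (dual C).smul_mem hχ₁.1 (by positivity), ?_,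
    fun x hx hx0 => hξ.exists_eq_smul x hx ?_⟩, hφ, hη, hφη, hφξ, hpos, fun f hf x hx => ?_⟩
  · rw [real_inner_smul_left, real_inner_comm, (mem_face.1 hχ₁).2, mul_zero]
  · rw [real_inner_smul_left] at hx0
    have hχ := hdom (mem_face.2 ⟨hξ.dual_mem, by rw [real_inner_comm, hξ.inner_eq_zero]⟩) hx
    rw [(mul_eq_zero.1 hx0).resolve_left (by positivity), mul_zero] at hχ
    exact hχ.antisymm (inner_nonneg hξ.dual_mem hx)
  · have hfη := hnorm f hf.1
    rw [inner_add_left, (mem_face.1 hf).2, zero_add, real_inner_comm] at hfη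
    calc ⟪f, x⟫ ≤ M * ‖f‖ * ⟪χ₁, x⟫ := hdom hf hx
      _ = M / m * (m * ‖f‖) * ⟪χ₁, x⟫ := by field_simp
      _ ≤ M / m * ⟪f, η⟫ * ⟪χ₁, x⟫ := by
          gcongr
          exact inner_nonneg hχ₁.1 hx
      _ = ⟪f, η⟫ * ⟪(M / m) • χ₁, x⟫ := by
          rw [real_inner_smul_left]
          ring

theorem isSimplicial_of_dual_face_le_span (hC : IsRegular C) (hns : ¬ HasSandwich C)
    (hξ : Exposes C ξ χ) (hdual : ∀ f ∈ face (dual C) ξ, ∃ c : ℝ, f = c • χ) :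
    (C : PointedCone ℝ E).IsSimplicial := by
  rcases eq_or_ne χ 0 with rfl | hχ0
  · exact hξ.isSimplicial
  obtain ⟨φ, hφ, η, hη, hφη, hφξ, hpos⟩ := exists_complement hC hξ.mem hξ.ne_zero
  have hχη : 0 < ⟪χ, η⟫ := by
    have h := hpos χ hξ.dual_mem hχ0
    rwa [real_inner_comm, inner_add_right, hξ.inner_eq_zero, zero_add] at h
  have h : RayComplement C ξ (⟪χ, η⟫⁻¹ • χ) φ η :=
    ⟨⟨hξ.mem, hξ.ne_zero, (dual C).smul_mem hξ.dual_mem (by positivity),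
      by rw [real_inner_smul_left, hξ.inner_eq_zero, mul_zero],
      fun x hx hx0 => hξ.exists_eq_smul x hx (by
        rw [real_inner_smul_left] at hx0
        exact (mul_eq_zero.1 hx0).resolve_left (inv_ne_zero hχη.ne'))⟩,
      hφ, hη, hφη, hφξ, hpos, fun f hf x _ => by
        obtain ⟨c, rfl⟩ := hdual f hf
        simp only [real_inner_smul_left]
        field_simp
        rfl⟩
  have hsum {x : E} (hx : x ∈ C) : ⟪φ, x⟫ • ξ + ⟪⟪χ, η⟫⁻¹ • χ, x⟫ • η = x := by
    have hmem : ⟪φ, x⟫ • ξ + ⟪⟪χ, η⟫⁻¹ • χ, x⟫ • η - x ∈ C := mem_of_forall_dual fun f hf => by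
      simp only [inner_sub_right, inner_add_right, real_inner_smul_right, sub_nonneg]
      exact h.inner_le hns hx hf
    refine sub_eq_zero.1 ((h.strictPos_exposing_add one_pos).eq_zero hmem ?_)
    simp only [one_smul, inner_add_left, inner_sub_right, inner_add_right, real_inner_smul_right,
      real_inner_smul_left, hφη, hφξ, hξ.inner_eq_zero]
    field_simp
    ring
  refine isSimplicial_of_biorthogonal (e := ![ξ, η]) (l := ![φ, ⟪χ, η⟫⁻¹ • χ])
    (Fin.forall_fin_two.2 ⟨hξ.mem, hη⟩) (Fin.forall_fin_two.2 ⟨hφ, h.exposes.dual_mem⟩) ?_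
    fun _ hx => (Fin.sum_univ_two _).trans (hsum hx)
  simp [Fin.forall_fin_two, hφη, hφξ, real_inner_smul_left, hξ.inner_eq_zero, hχη.ne']

theorem exists_dual_mem_of_exposes (hC : IsRegular C) (hns : ¬ HasSandwich C)
    (hsimp : ¬ (C : PointedCone ℝ E).IsSimplicial) {ξ₁ χ₁ ξ₂ χ₂ : E} (h₁ : Exposes C ξ₁ χ₁)
    (h₂ : Exposes C ξ₂ χ₂) : ∃ f ∈ dual C, f ≠ 0 ∧ ⟪f, ξ₁⟫ = 0 ∧ ⟪f, ξ₂⟫ = 0 := by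
  by_contra! hcon
  have hpos : StrictPos (dual C) (ξ₁ + ξ₂) :=
    strictPos_dual_add h₁.mem h₂.mem fun f hf hf₁ hf₂ => of_not_not fun h0 => hcon f hf h0 hf₁ hf₂
  have hχξ : 0 < ⟪χ₂, ξ₁⟫ := by
    refine (inner_nonneg h₂.dual_mem h₁.mem).lt_of_ne' fun h0 => ?_
    refine hcon χ₂ h₂.dual_mem ?_ h0 h₂.inner_eq_zero
    rintro rfl
    exact hsimp h₂.isSimplicial
  obtain ⟨χ, h⟩ := exists_rayComplement h₁ (φ := ⟪χ₂, ξ₁⟫⁻¹ • χ₂)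
    ((dual C).smul_mem h₂.dual_mem (by positivity)) h₂.mem
    (by rw [real_inner_smul_left, h₂.inner_eq_zero, mul_zero])
    (by rw [real_inner_smul_left, inv_mul_cancel₀ hχξ.ne']) hpos
  refine hsimp (isSimplicial_of_dual_face_le_span hC hns h₂ fun f hf => ?_)
  obtain ⟨hfD, hf0⟩ := mem_face.1 hf
  rw [real_inner_comm] at hf0
  exact ⟨_, (h.eq_smul hC hns hfD hf0).trans (smul_smul _ _ _)⟩

end Rays

section ExposedRays

variable {E : Type*} [NormedAddCommGroup E] [InnerProductSpace ℝ E]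

/-- The point is found by maximising a strictly convex function, so that it is a farthest point
of `S` from some centre. -/
theorem exists_inner_neg_forall_norm_sq_le {S : Set E} (hS : IsCompact S) {l q : E} (hq : q ∈ S)
    (hlq : ⟪l, q⟫ < 0) :
    ∃ v ∈ S, ⟪l, v⟫ < 0 ∧ ∃ c : E, ∀ w ∈ S, ‖w - v‖ ^ 2 ≤ ⟪c, w - v⟫ := by
  obtain ⟨b, -, hbmax⟩ := hS.exists_isMaxOn ⟨q, hq⟩ (f := fun v => ‖v‖ ^ 2) (by fun_prop)
  obtain ⟨t, ht, htq⟩ : ∃ t : ℝ, 0 < t ∧ ‖b‖ ^ 2 < ‖q‖ ^ 2 - t * ⟪l, q⟫ := by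
    refine ⟨(‖b‖ ^ 2 + 1) / -⟪l, q⟫, by have := neg_pos.2 hlq; positivity, ?_⟩
    have h : (‖b‖ ^ 2 + 1) / -⟪l, q⟫ * ⟪l, q⟫ = -(‖b‖ ^ 2 + 1) := by
      rw [div_neg, neg_mul, div_mul_cancel₀ _ hlq.ne]
    nlinarith [sq_nonneg ‖q‖]
  obtain ⟨v, hv, hvmax⟩ := hS.exists_isMaxOn ⟨q, hq⟩ (f := fun v => ‖v‖ ^ 2 - t * ⟪l, v⟫)
    (by fun_prop)
  have hmax {w : E} (hw : w ∈ S) : ‖w‖ ^ 2 - t * ⟪l, w⟫ ≤ ‖v‖ ^ 2 - t * ⟪l, v⟫ := hvmax hw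
  refine ⟨v, hv, ?_, t • l - (2 : ℝ) • v, fun w hw => ?_⟩
  · have hvb : ‖v‖ ^ 2 ≤ ‖b‖ ^ 2 := hbmax hv
    have hqv := hmax hq
    exact neg_of_mul_neg_right (a := t) (by linarith) ht.le
  · have hwv := hmax hw
    rw [norm_sub_sq_real, real_inner_comm, inner_sub_left, real_inner_smul_left,
      real_inner_smul_left, inner_sub_right, inner_sub_right, real_inner_self_eq_norm_sq]
    linarith

section Complete

variable [CompleteSpace E] {C : ProperCone ℝ E}

theorem exposes_of_forall_norm_sq_le {u v c : E} (hu : StrictPos C u) (hv : v ∈ C)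
    (huv : ⟪u, v⟫ = 1) (hc : ∀ w ∈ C, ⟪u, w⟫ = 1 → ‖w - v‖ ^ 2 ≤ ⟪c, w - v⟫) :
    Exposes C v (c - ⟪c, v⟫ • u) := by
  have hχ {x : E} (hx : x ∈ C) (h0 : x ≠ 0) :
      ‖⟪u, x⟫⁻¹ • x - v‖ ^ 2 ≤ ⟪u, x⟫⁻¹ * ⟪c - ⟪c, v⟫ • u, x⟫ := by
    have hpos := hu x hx h0
    obtain ⟨hw, huw⟩ := hu.smul_mem_base hx h0
    refine (hc _ hw huw).trans_eq ?_
    rw [inner_sub_right, real_inner_smul_right, inner_sub_left, real_inner_smul_left]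
    field_simp
  refine ⟨hv, ?_, mem_dual.2 fun x hx => ?_, ?_, fun x hx hx0 => ?_⟩
  · rintro rfl
    simp at huv
  · rcases eq_or_ne x 0 with rfl | h0
    · rw [inner_zero_right]
    · exact nonneg_of_mul_nonneg_right ((sq_nonneg _).trans (hχ hx h0)) (inv_pos.2 (hu x hx h0))
  · rw [inner_sub_left, real_inner_smul_left, huv, mul_one, sub_self]
  · rcases eq_or_ne x 0 with rfl | h0
    · exact ⟨0, le_rfl, (zero_smul ℝ v).symm⟩
    have hpos := hu x hx h0
    have hle := hχ hx h0
    rw [hx0, mul_zero] at hle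
    have heq : ⟪u, x⟫⁻¹ • x = v := by
      simpa [sub_eq_zero] using hle.antisymm (sq_nonneg _)
    exact ⟨⟪u, x⟫, hpos.le, by rw [← heq, smul_inv_smul₀ hpos.ne']⟩

theorem Exposes.smul {ξ χ : E} (h : Exposes C ξ χ) {c : ℝ} (hc : 0 < c) : Exposes C (c • ξ) χ where
  mem := C.smul_mem h.mem hc.le
  ne_zero := smul_ne_zero hc.ne' h.ne_zero
  dual_mem := h.dual_mem
  inner_eq_zero := by rw [real_inner_smul_right, h.inner_eq_zero, mul_zero]
  exists_eq_smul x hx hx0 := by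
    obtain ⟨d, hd, rfl⟩ := h.exists_eq_smul x hx hx0
    exact ⟨d * c⁻¹, by positivity, by rw [smul_smul, inv_mul_cancel_right₀ hc.ne']⟩

theorem Exposes.exists_eq_smul_of_sum {ξ χ : E} (h : Exposes C ξ χ) {ι : Type*} [Fintype ι]
    {e : ι → E} (he : ∀ i, e i ∈ C) {c : ι → ℝ} (hc : ∀ i, 0 ≤ c i) (hsum : ∑ i, c i • e i = ξ) :
    ∃ i, ∃ a : ℝ, 0 < a ∧ ξ = a • e i := by
  have hχ : ∀ i ∈ Finset.univ, 0 ≤ c i * ⟪χ, e i⟫ := fun i _ =>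
    mul_nonneg (hc i) (inner_nonneg h.dual_mem (he i))
  have hsum0 : ∑ i, c i * ⟪χ, e i⟫ = 0 := by
    simpa only [← hsum, inner_sum, real_inner_smul_right] using h.inner_eq_zero
  obtain ⟨i, -, hi⟩ := Finset.exists_ne_zero_of_sum_ne_zero (hsum.trans_ne h.ne_zero)
  obtain ⟨hci, hei⟩ := smul_ne_zero_iff.1 hi
  obtain ⟨a, ha, hae⟩ := h.exists_eq_smul (e i) (he i)
    ((mul_eq_zero.1 ((Finset.sum_eq_zero_iff_of_nonneg hχ).1 hsum0 i
      (Finset.mem_univ i))).resolve_left hci)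
  have ha0 : a ≠ 0 := by
    rintro rfl
    exact hei (hae.trans (zero_smul ℝ ξ))
  exact ⟨i, a⁻¹, by positivity, by rw [hae, inv_smul_smul₀ ha0]⟩

end Complete

variable [FiniteDimensional ℝ E] {C : ProperCone ℝ E}

theorem mem_dual_of_forall_exposes (hC : IsRegular C) {l : E}
    (hl : ∀ ζ χ, Exposes C ζ χ → 0 ≤ ⟪l, ζ⟫) : l ∈ dual C := by
  obtain ⟨u, hu⟩ := exists_strictPos hC.salient
  refine mem_dual.2 fun x hx => ?_
  by_contra! hlx
  have hx0 : x ≠ 0 := by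
    rintro rfl
    simp at hlx
  obtain ⟨v, ⟨hv, huv⟩, hlv, c, hc⟩ := exists_inner_neg_forall_norm_sq_le hu.isCompact_base
    (hu.smul_mem_base hx hx0) (l := l) (by
      rw [real_inner_smul_right]
      exact mul_neg_of_pos_of_neg (inv_pos.2 (hu x hx hx0)) hlx)
  exact hlv.not_ge (hl v _ (exposes_of_forall_norm_sq_le hu hv huv fun w hw huw => hc w ⟨hw, huw⟩))

theorem exists_exposes (hC : IsRegular C) (hsimp : ¬ (C : PointedCone ℝ E).IsSimplicial) :
    ∃ ξ χ, Exposes C ξ χ := by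
  by_contra! hcon
  have hmem (l : E) : l ∈ dual C :=
    mem_dual_of_forall_exposes hC fun ζ χ h => (hcon ζ χ h).elim
  have h0 (l : E) : l = 0 := hC.dual_salient l (hmem l) (hmem (-l))
  exact hsimp (isSimplicial_of_biorthogonal (ι := Empty) (e := Empty.elim) (l := Empty.elim)
    nofun nofun nofun fun x _ => (h0 _).trans (h0 x).symm)

end ExposedRays

section SimplicialFaces

variable {E : Type*} [NormedAddCommGroup E] [InnerProductSpace ℝ E]

section Complete

variable [CompleteSpace E] {C : ProperCone ℝ E} {ξ χ : E}

theorem exists_smul_add_mem_dual {T : Finset E}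
    (hT : ∀ l, (∀ t ∈ T, 0 ≤ ⟪l, t⟫) → l ∈ dual C) {a b : E} (ha : ∀ t ∈ T, 0 ≤ ⟪a, t⟫)
    (hb : ∀ t ∈ T, ⟪a, t⟫ = 0 → 0 ≤ ⟪b, t⟫) : ∃ K : ℝ, K • a + b ∈ dual C := by
  have hev : ∀ t ∈ T, ∀ᶠ K : ℝ in Filter.atTop, 0 ≤ ⟪K • a + b, t⟫ := by
    intro t ht
    simp only [inner_add_left, real_inner_smul_left]
    rcases (ha t ht).eq_or_lt' with h0 | h0
    · exact .of_forall fun K => by simpa [h0] using hb t ht h0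
    · exact (Filter.tendsto_atTop_add_const_right _ _
        (Filter.tendsto_id.atTop_mul_const h0)).eventually_ge_atTop 0
  obtain ⟨K, hK⟩ := ((Filter.eventually_all_finset T).2 hev).exists
  exact ⟨K, hT _ hK⟩

theorem exists_mem_inner_eq_zero_inner_pos {T : Finset E} (hTC : ∀ t ∈ T, t ∈ C)
    (hT : ∀ l, (∀ t ∈ T, 0 ≤ ⟪l, t⟫) → l ∈ dual C) {ι : Type*} [Fintype ι] {g : ι → E}
    (hg : ∀ i, g i ∈ face (dual C) ξ) (hgi : LinearIndependent ℝ g)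
    (hgen : ∀ f ∈ face (dual C) ξ, ∃ c : ι → ℝ, (∀ i, 0 ≤ c i) ∧ ∑ i, c i • g i = f) (j : ι) :
    ∃ t ∈ T, (∀ i ≠ j, ⟪g i, t⟫ = 0) ∧ 0 < ⟪g j, t⟫ := by
  classical
  by_contra! hcon
  have hrest : ∑ i ∈ Finset.univ.erase j, g i ∈ face (dual C) ξ := sum_mem fun i _ => hg i
  obtain ⟨K, hK⟩ := exists_smul_add_mem_dual hT (b := -g j)
    (fun t ht => inner_nonneg hrest.1 (hTC t ht)) fun t ht h0 => by
      rw [sum_inner, Finset.sum_eq_zero_iff_of_nonneg fun i _ =>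
        inner_nonneg (hg i).1 (hTC t ht)] at h0
      rw [inner_neg_left, neg_nonneg]
      exact hcon t ht fun i hi => h0 i (by simp [hi])
  obtain ⟨c, hc, hsum⟩ := hgen _ (mem_face.2 ⟨hK, by
    rw [inner_add_right, real_inner_smul_right, inner_neg_right, (mem_face.1 hrest).2,
      (mem_face.1 (hg j)).2, mul_zero, neg_zero, add_zero]⟩)
  have hdiff : ∑ i, (c i - if i = j then -1 else K) • g i = 0 := by
    simp only [sub_smul, Finset.sum_sub_distrib, hsum, sub_eq_zero]
    rw [← Finset.add_sum_erase _ (fun i => (if i = j then (-1 : ℝ) else K) • g i)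
      (Finset.mem_univ j), Finset.smul_sum, if_pos rfl, neg_one_smul, add_comm]
    exact congrArg _ (Finset.sum_congr rfl fun i hi => by rw [if_neg (Finset.ne_of_mem_erase hi)])
  have hj := Fintype.linearIndependent_iff.1 hgi _ hdiff j
  rw [if_pos rfl] at hj
  linarith [hc j]

theorem Exposes.orthogonal_le_span (h : Exposes C ξ χ) {T : Finset E} (hTC : ∀ t ∈ T, t ∈ C)
    (hT : ∀ l, (∀ t ∈ T, 0 ≤ ⟪l, t⟫) → l ∈ dual C) :
    (ℝ ∙ ξ)ᗮ ≤ Submodule.span ℝ (face (dual C) ξ : Set E) := by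
  intro w hw
  rw [Submodule.mem_orthogonal_singleton_iff_inner_right] at hw
  have hχ : χ ∈ face (dual C) ξ :=
    mem_face.2 ⟨h.dual_mem, by rw [real_inner_comm, h.inner_eq_zero]⟩
  obtain ⟨K, hK⟩ := exists_smul_add_mem_dual hT (b := w)
    (fun t ht => inner_nonneg h.dual_mem (hTC t ht)) fun t ht h0 => by
      obtain ⟨c, -, rfl⟩ := h.exists_eq_smul t (hTC t ht) h0
      rw [real_inner_smul_right, real_inner_comm, hw, mul_zero]
  have hKw : K • χ + w ∈ face (dual C) ξ := mem_face.2 ⟨hK, by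
    rw [inner_add_right, real_inner_smul_right, (mem_face.1 hχ).2, hw, mul_zero, add_zero]⟩
  rw [← add_sub_cancel_left (K • χ) w]
  exact sub_mem (Submodule.subset_span hKw)
    (Submodule.smul_mem _ K (Submodule.subset_span hχ))

theorem isSimplicial_of_dual_frame {ι : Type*} [Fintype ι] [DecidableEq ι] {g x : ι → E}
    (hξ : ξ ∈ C) (hξ0 : ξ ≠ 0) (hg : ∀ i, g i ∈ face (dual C) ξ) (hx : ∀ i, x i ∈ C)
    (hgx : ∀ i j, ⟪g i, x j⟫ = if i = j then (1 : ℝ) else 0)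
    (hspan : ∀ v, ∃ a : ℝ, v = a • ξ + ∑ j, ⟪g j, v⟫ • x j)
    (hdual : ∀ l, 0 ≤ ⟪l, ξ⟫ → (∀ j, 0 ≤ ⟪l, x j⟫) → l ∈ dual C) :
    (C : PointedCone ℝ E).IsSimplicial := by
  have hgξ (i : ι) : ⟪g i, ξ⟫ = 0 := by rw [real_inner_comm, (mem_face.1 (hg i)).2]
  set m := ⟪ξ, ξ⟫⁻¹ • ξ
  set l := m - ∑ j, ⟪m, x j⟫ • g j
  have hlξ : ⟪l, ξ⟫ = 1 := by
    simp [l, m, inner_sub_left, sum_inner, real_inner_smul_left, hgξ, hξ0]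
  have hlx (j : ι) : ⟪l, x j⟫ = 0 := by
    simp [l, inner_sub_left, sum_inner, real_inner_smul_left, hgx]
  have hl : l ∈ dual C := hdual l (by rw [hlξ]; exact zero_le_one) fun j => (hlx j).ge
  refine isSimplicial_of_biorthogonal (e := fun o : Option ι => o.elim ξ x)
    (l := fun o => o.elim l g) (Option.forall.2 ⟨hξ, hx⟩)
    (Option.forall.2 ⟨hl, fun i => (hg i).1⟩) ?_ fun v _ => ?_
  · simp [Option.forall, hlξ, hlx, hgξ, hgx]
  · obtain ⟨a, ha⟩ := hspan v
    have hlv : ⟪l, v⟫ = a := by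
      rw [ha]
      simp [inner_add_right, inner_sum, real_inner_smul_right, hlξ, hlx]
    rw [Fintype.sum_option]
    simp only [Option.elim, hlv]
    exact ha.symm

/-- The element `ζ` spans an extreme ray of `C` which is exposed by some dual vector. -/
def IsExposedRay (C : ProperCone ℝ E) (ζ : E) : Prop := ∃ χ, Exposes C ζ χ

theorem IsExposedRay.mem {ζ : E} : IsExposedRay C ζ → ζ ∈ C := fun ⟨_, h⟩ => h.mem

theorem IsExposedRay.smul {ζ : E} (hζ : IsExposedRay C ζ) {c : ℝ} (hc : 0 < c) :
    IsExposedRay C (c • ζ) := hζ.imp fun _ h => h.smul hc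

theorem IsExposedRay.exists_eq_smul_generator {h ζ : E} {s : Finset E}
    (hsC : ∀ i : s, (i : E) ∈ face C h)
    (hs : ∀ x ∈ face C h, ∃ c : s → ℝ, (∀ i, 0 ≤ c i) ∧ ∑ i, c i • (i : E) = x)
    (hζ : IsExposedRay C ζ) (hhζ : ⟪h, ζ⟫ = 0) : ∃ i : s, ∃ a : ℝ, 0 < a ∧ ζ = a • (i : E) := by
  obtain ⟨χ, hχ⟩ := hζ
  obtain ⟨c, hc, hsum⟩ := hs ζ (mem_face.2 ⟨hχ.mem, hhζ⟩)
  exact hχ.exists_eq_smul_of_sum (fun i => (mem_face.1 (hsC i)).1) hc hsum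

theorem IsExposedRay.exists_eq_smul_of_mem_span {h : E}
    (hF : (face C h : PointedCone ℝ E).IsSimplicial) {S : Set E}
    (hS : ∀ z ∈ S, IsExposedRay C z ∧ ⟪h, z⟫ = 0) {ζ : E} (hζ : IsExposedRay C ζ)
    (hhζ : ⟪h, ζ⟫ = 0) (hspan : ζ ∈ Submodule.span ℝ S) : ∃ z ∈ S, ∃ c : ℝ, 0 < c ∧ ζ = c • z := by
  obtain ⟨s, hli, hsC, hs⟩ := exists_finset_of_isSimplicial hF
  obtain ⟨b, a, ha, rfl⟩ := hζ.exists_eq_smul_generator hsC hs hhζ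
  let I : Set s := {i | ∃ z ∈ S, ∃ c : ℝ, 0 < c ∧ z = c • (i : E)}
  have hSI : Submodule.span ℝ S ≤ Submodule.span ℝ ((↑) '' I) := by
    refine Submodule.span_le.2 fun z hz => ?_
    obtain ⟨i, c, hc, rfl⟩ := (hS z hz).1.exists_eq_smul_generator hsC hs (hS z hz).2
    exact Submodule.smul_mem _ c (Submodule.subset_span ⟨i, ⟨_, hz, c, hc, rfl⟩, rfl⟩)
  have hb : (b : E) ∈ Submodule.span ℝ ((↑) '' I) :=
    (Submodule.smul_mem_iff _ ha.ne').1 (hSI hspan)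
  obtain ⟨z, hz, c, hc, rfl⟩ : b ∈ I := of_not_not fun hbI => hli.notMem_span_image hbI hb
  exact ⟨_, hz, a / c, div_pos ha hc, by rw [smul_smul, div_mul_cancel₀ a hc.ne']⟩

theorem exists_finset_isExposedRay {ι : Type*} [Finite ι] {h : ι → E}
    (hF : ∀ i, (face C (h i) : PointedCone ℝ E).IsSimplicial)
    (hcover : ∀ ζ, IsExposedRay C ζ → ∃ i, ⟪h i, ζ⟫ = 0) :
    ∃ T : Finset E, (∀ t ∈ T, IsExposedRay C t) ∧
      ∀ ζ, IsExposedRay C ζ → ∃ t ∈ T, ∃ c : ℝ, 0 < c ∧ ζ = c • t := by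
  classical
  cases nonempty_fintype ι
  choose s _ hsC hs using fun i => exists_finset_of_isSimplicial (hF i)
  refine ⟨(Finset.univ.biUnion s).filter (IsExposedRay C), fun t ht => (Finset.mem_filter.1 ht).2,
    fun ζ hζ => ?_⟩
  obtain ⟨i, hi⟩ := hcover ζ hζ
  obtain ⟨b, a, ha, rfl⟩ := hζ.exists_eq_smul_generator (hsC i) (hs i) hi
  refine ⟨b, Finset.mem_filter.2 ⟨Finset.mem_biUnion.2 ⟨i, Finset.mem_univ i, b.2⟩, ?_⟩, a, ha, rfl⟩
  simpa only [inv_smul_smul₀ ha.ne'] using hζ.smul (inv_pos.2 ha)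

end Complete

variable [FiniteDimensional ℝ E] {C : ProperCone ℝ E} {ξ χ : E}

theorem Exposes.exists_dual_frame (h : Exposes C ξ χ) {T : Finset E}
    (hTC : ∀ t ∈ T, IsExposedRay C t) (hT : ∀ l, (∀ t ∈ T, 0 ≤ ⟪l, t⟫) → l ∈ dual C)
    {ι : Type*} [Fintype ι] [DecidableEq ι] {g : ι → E}
    (hg : ∀ i, g i ∈ face (dual C) ξ) (hgi : LinearIndependent ℝ g)
    (hgen : ∀ f ∈ face (dual C) ξ, ∃ c : ι → ℝ, (∀ i, 0 ≤ c i) ∧ ∑ i, c i • g i = f) :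
    ∃ x : ι → E, (∀ i, IsExposedRay C (x i)) ∧
      (∀ i j, ⟪g i, x j⟫ = if i = j then (1 : ℝ) else 0) ∧
      ∀ v, ∃ a : ℝ, v = a • ξ + ∑ j, ⟪g j, v⟫ • x j := by
  have hTC' : ∀ t ∈ T, t ∈ C := fun t ht => (hTC t ht).mem
  choose t htT hzero hpos using exists_mem_inner_eq_zero_inner_pos hTC' hT hg hgi hgen
  have hgx (i j : ι) : ⟪g i, ⟪g j, t j⟫⁻¹ • t j⟫ = if i = j then (1 : ℝ) else 0 := by
    rw [real_inner_smul_right]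
    split_ifs with hij
    · rw [hij, inv_mul_cancel₀ (hpos j).ne']
    · rw [hzero j i hij, mul_zero]
  refine ⟨fun j => ⟪g j, t j⟫⁻¹ • t j, fun j => (hTC _ (htT j)).smul (inv_pos.2 (hpos j)), hgx,
    fun v => ?_⟩
  set w := v - ∑ j, ⟪g j, v⟫ • ⟪g j, t j⟫⁻¹ • t j with hw
  have hgw (i : ι) : ⟪g i, w⟫ = 0 := by
    have hterm (j : ι) : ⟪g i, ⟪g j, v⟫ • ⟪g j, t j⟫⁻¹ • t j⟫ = if i = j then ⟪g j, v⟫ else 0 := by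
      rw [real_inner_smul_right, hgx, mul_ite, mul_one, mul_zero]
    simp only [hw, inner_sub_right, inner_sum, hterm, Finset.sum_ite_eq, Finset.mem_univ, if_true,
      sub_self]
  have hface : Submodule.span ℝ (face (dual C) ξ : Set E) ≤ (ℝ ∙ w)ᗮ := by
    refine Submodule.span_le.2 fun f hf => ?_
    obtain ⟨c, -, rfl⟩ := hgen f hf
    refine Submodule.sum_mem _ fun i _ => Submodule.smul_mem _ _ ?_
    rw [Submodule.mem_orthogonal_singleton_iff_inner_left, hgw]
  have hwξ : w ∈ ℝ ∙ ξ := by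
    have hle := Submodule.orthogonal_le ((h.orthogonal_le_span hTC' hT).trans hface)
    rw [Submodule.orthogonal_orthogonal, Submodule.orthogonal_orthogonal] at hle
    exact hle (Submodule.mem_span_singleton_self w)
  obtain ⟨a, ha⟩ := Submodule.mem_span_singleton.1 hwξ
  exact ⟨a, by rw [ha, hw, sub_add_cancel]⟩

theorem mem_dual_of_frame (hC : IsRegular C) {ι : Type*} [Fintype ι] [DecidableEq ι]
    {g x : ι → E} (hξ : IsExposedRay C ξ) (hgξ : ∀ i, ⟪g i, ξ⟫ = 0)
    (hx : ∀ i, IsExposedRay C (x i))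
    (hgx : ∀ i j, ⟪g i, x j⟫ = if i = j then (1 : ℝ) else 0)
    (hspan : ∀ v, ∃ a : ℝ, v = a • ξ + ∑ j, ⟪g j, v⟫ • x j)
    (hF : ∀ i, (face C (g i) : PointedCone ℝ E).IsSimplicial)
    (hcover : ∀ ζ, IsExposedRay C ζ → ∃ i, ⟪g i, ζ⟫ = 0)
    {l : E} (hlξ : 0 ≤ ⟪l, ξ⟫) (hlx : ∀ j, 0 ≤ ⟪l, x j⟫) : l ∈ dual C := by
  refine mem_dual_of_forall_exposes hC fun ζ χ hζ => ?_
  obtain ⟨i, hi⟩ := hcover ζ ⟨χ, hζ⟩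
  have hS : ∀ z ∈ insert ξ (x '' {j | j ≠ i}), IsExposedRay C z ∧ ⟪g i, z⟫ = 0 := by
    refine Set.forall_mem_insert.2 ⟨⟨hξ, hgξ i⟩, Set.forall_mem_image.2 fun j hj => ⟨hx j, ?_⟩⟩
    rw [hgx, if_neg (Ne.symm hj)]
  have hζspan : ζ ∈ Submodule.span ℝ (insert ξ (x '' {j | j ≠ i})) := by
    obtain ⟨a, ha⟩ := hspan ζ
    rw [ha]
    refine add_mem (Submodule.smul_mem _ a (Submodule.subset_span (Set.mem_insert _ _)))
      (Submodule.sum_mem _ fun j _ => ?_)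
    rcases eq_or_ne j i with rfl | hj
    · rw [hi, zero_smul]
      exact zero_mem _
    · exact Submodule.smul_mem _ _
        (Submodule.subset_span (Set.mem_insert_of_mem _ (Set.mem_image_of_mem x hj)))
  obtain ⟨z, hz, c, hc, rfl⟩ :=
    IsExposedRay.exists_eq_smul_of_mem_span (hF i) hS ⟨χ, hζ⟩ hi hζspan
  rw [real_inner_smul_right]
  refine mul_nonneg hc.le ?_
  rcases hz with rfl | ⟨j, -, rfl⟩
  exacts [hlξ, hlx j]

theorem isSimplicial_of_faces (hC : IsRegular C) (hns : ¬ HasSandwich C)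
    (hface : ∀ h ∈ dual C, h ≠ 0 → (face C h : PointedCone ℝ E).IsSimplicial)
    (hdual_face : ∀ ξ ∈ C, ξ ≠ 0 → (face (dual C) ξ : PointedCone ℝ E).IsSimplicial) :
    (C : PointedCone ℝ E).IsSimplicial := by
  classical
  by_contra hsimp
  obtain ⟨ξ, χ, hξ⟩ := exists_exposes hC hsimp
  obtain ⟨s, hli, hg, hs⟩ := exists_finset_of_isSimplicial (hdual_face ξ hξ.mem hξ.ne_zero)
  have hF (i : s) : (face C (i : E) : PointedCone ℝ E).IsSimplicial :=
    hface i (mem_face.1 (hg i)).1 (hli.ne_zero i)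
  have hcover (ζ : E) : IsExposedRay C ζ → ∃ i : s, ⟪(i : E), ζ⟫ = 0 := by
    rintro ⟨χ', hζ⟩
    obtain ⟨f, hf, hf0, hfξ, hfζ⟩ := exists_dual_mem_of_exposes hC hns hsimp hξ hζ
    obtain ⟨c, hc, rfl⟩ := hs f (mem_face.2 ⟨hf, by rwa [real_inner_comm]⟩)
    obtain ⟨i, -, hi⟩ := Finset.exists_ne_zero_of_sum_ne_zero hf0
    simp only [sum_inner, real_inner_smul_left] at hfζ
    rw [Finset.sum_eq_zero_iff_of_nonneg fun j _ =>
      mul_nonneg (hc j) (inner_nonneg (mem_face.1 (hg j)).1 hζ.mem)] at hfζ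
    exact ⟨i, (mul_eq_zero.1 (hfζ i (Finset.mem_univ i))).resolve_left (left_ne_zero_of_smul hi)⟩
  obtain ⟨T, hTC, hT⟩ := exists_finset_isExposedRay hF hcover
  have hTdual (l : E) (hl : ∀ t ∈ T, 0 ≤ ⟪l, t⟫) : l ∈ dual C :=
    mem_dual_of_forall_exposes hC fun ζ χ' hζ => by
      obtain ⟨t, ht, c, hc, rfl⟩ := hT ζ ⟨χ', hζ⟩
      exact real_inner_smul_right l t c ▸ mul_nonneg hc.le (hl t ht)
  obtain ⟨x, hx, hgx, hspan⟩ :=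
    hξ.exists_dual_frame hTC hTdual hg hli hs
  refine hsimp (isSimplicial_of_dual_frame hξ.mem hξ.ne_zero hg (fun i => (hx i).mem) hgx hspan
    fun l => mem_dual_of_frame hC ⟨χ, hξ⟩ (fun i => ?_) hx hgx hspan hF hcover)
  rw [real_inner_comm, (mem_face.1 (hg i)).2]

end SimplicialFaces

section Induction

theorem isSimplicial_map {E F : Type*} [AddCommGroup E] [Module ℝ E] [AddCommGroup F] [Module ℝ F]
    {C : PointedCone ℝ E} (hC : C.IsSimplicial) {T : E →ₗ[ℝ] F} (hT : Function.Injective T) :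
    (C.map T).IsSimplicial := by
  obtain ⟨s, hs, hli, rfl⟩ := hC
  refine ⟨T '' s, hs.image T, ?_, (Submodule.map_span (T.restrictScalars _) s).symm⟩
  exact (hli.map_injOn T hT.injOn).id_image

variable {E : Type*} [NormedAddCommGroup E] [InnerProductSpace ℝ E] {C G : ProperCone ℝ E}

/-- The cone `G`, regarded as a cone in its linear span. -/
noncomputable def spanCone (G : ProperCone ℝ E) :
    ProperCone ℝ (Submodule.span ℝ (G : Set E)) :=
  ProperCone.comap (Submodule.subtypeL _) G

theorem isSimplicial_of_spanCone
    (h : (spanCone G : PointedCone ℝ (Submodule.span ℝ (G : Set E))).IsSimplicial) :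
    (G : PointedCone ℝ E).IsSimplicial := by
  convert isSimplicial_map h (Submodule.subtype_injective _) using 1
  ext x
  exact ⟨fun hx => ⟨⟨x, Submodule.subset_span hx⟩, hx, rfl⟩, fun ⟨_, hy, hyx⟩ => hyx ▸ hy⟩

variable [FiniteDimensional ℝ E]

theorem isSimplicial_of_dual (hC : IsRegular C) (h : (dual C : PointedCone ℝ E).IsSimplicial) :
    (C : PointedCone ℝ E).IsSimplicial := by
  classical
  obtain ⟨s, hli, hsC, hs⟩ := exists_finset_of_isSimplicial h
  have hext {v w : E} (h : ∀ i : s, ⟪(i : E), v⟫ = ⟪(i : E), w⟫) : v = w :=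
    hC.ext_of_dual fun f hf => by
      obtain ⟨c, -, rfl⟩ := hs f hf
      simp only [sum_inner, real_inner_smul_left, h]
  have hspan : ⊤ ≤ Submodule.span ℝ (Set.range ((↑) : s → E)) := by
    rw [top_le_iff, ← Submodule.orthogonal_eq_bot_iff, Submodule.eq_bot_iff]
    exact fun v hv => hext fun i => by
      rw [hv _ (Submodule.subset_span ⟨i, rfl⟩), inner_zero_right]
  let b := Module.Basis.mk hli hspan
  have hb (i : s) : b i = i := Module.Basis.mk_apply hli hspan i
  let e (i : s) : E :=
    (InnerProductSpace.toDual ℝ E).symm (LinearMap.toContinuousLinearMap (b.coord i))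
  have he (i : s) (x : E) : ⟪x, e i⟫ = b.repr x i := by
    rw [real_inner_comm]
    exact InnerProductSpace.toDual_symm_apply
  have hle (i j : s) : ⟪(i : E), e j⟫ = if i = j then (1 : ℝ) else 0 := by
    rw [he, ← hb, b.repr_self, Finsupp.single_apply]
  refine isSimplicial_of_biorthogonal (e := e) (l := (↑))
    (fun i => mem_of_forall_dual fun f hf => ?_) hsC hle fun x _ => ?_
  · obtain ⟨c, hc, rfl⟩ := hs f hf
    simpa only [sum_inner, real_inner_smul_left, hle, mul_ite, mul_one, mul_zero,
      Finset.sum_ite_eq', Finset.mem_univ, if_true] using hc i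
  · refine hext fun j => ?_
    simp only [inner_sum, real_inner_smul_right, hle, mul_ite, mul_one, mul_zero,
      Finset.sum_ite_eq, Finset.mem_univ, if_true]

theorem coe_mem_dual_of_mem_dual_spanCone {g : Submodule.span ℝ (G : Set E)}
    (hg : g ∈ dual (spanCone G)) : (g : E) ∈ dual G :=
  mem_dual.2 fun x hx => inner_nonneg hg (x := ⟨x, Submodule.subset_span hx⟩) hx

theorem isRegular_spanCone (hG : ∀ x ∈ G, -x ∈ G → x = 0) : IsRegular (spanCone G) where
  salient x hx hnx := Subtype.ext (hG x hx hnx)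
  dual_salient f hf hnf := by
    have hle : Submodule.span ℝ (G : Set E) ≤ (ℝ ∙ (f : E))ᗮ := Submodule.span_le.2 fun x hx => by
      rw [SetLike.mem_coe, Submodule.mem_orthogonal_singleton_iff_inner_right]
      have hneg := inner_nonneg (coe_mem_dual_of_mem_dual_spanCone hnf) hx
      rw [Submodule.coe_neg, inner_neg_left, neg_nonneg] at hneg
      exact hneg.antisymm (inner_nonneg (coe_mem_dual_of_mem_dual_spanCone hf) hx)
    exact Subtype.ext (inner_self_eq_zero.1
      ((Submodule.mem_orthogonal_singleton_iff_inner_right).1 (hle f.2)))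

theorem finrank_span_face_lt {h : E} (h0 : h ≠ 0) :
    Module.finrank ℝ (Submodule.span ℝ (face C h : Set E)) < Module.finrank ℝ E := by
  refine Submodule.finrank_lt fun htop => h0 ((inner_self_eq_zero (𝕜 := ℝ)).1 ?_)
  have hle : Submodule.span ℝ (face C h : Set E) ≤ (ℝ ∙ h)ᗮ := Submodule.span_le.2 fun x hx =>
    (Submodule.mem_orthogonal_singleton_iff_inner_right).2 (mem_face.1 hx).2
  exact (Submodule.mem_orthogonal_singleton_iff_inner_right).1 (hle (htop ▸ Submodule.mem_top))

theorem HasSandwich.of_spanCone_face (hC : IsRegular C) {h : E} (hh : h ∈ dual C)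
    (hS : HasSandwich (spanCone (face C h))) : HasSandwich C :=
  hS.of_subset_closure fun δ hδ =>
    (sandwichMatrices_subset_of_linearIsometry (Submodule.subtypeₗᵢ _) (fun _ hy => hy)
      (fun _ hg => coe_mem_dual_of_mem_dual_spanCone hg) δ).trans
    (sandwichMatrices_face_subset_closure hC.salient hh hδ)

theorem HasSandwich.of_dual_spanCone_face (hC : IsRegular C) {ξ : E} (hξ : ξ ∈ C)
    (hS : HasSandwich (dual (spanCone (face (dual C) ξ)))) : HasSandwich C :=
  hS.of_subset_closure fun δ _ =>
    (sandwichMatrices_subset_of_linearIsometry (Submodule.subtypeₗᵢ _)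
      (fun _ hy => coe_mem_dual_of_mem_dual_spanCone hy)
      (fun _ hg => by
        rw [dual_dual] at hg ⊢
        exact hg) δ).trans
    (sandwichMatrices_dual_face_subset_closure hC.dual_salient hξ δ)

theorem hasSandwich_of_not_isSimplicial {E : Type*} [NormedAddCommGroup E] [InnerProductSpace ℝ E]
    [FiniteDimensional ℝ E] {C : ProperCone ℝ E} (hC : IsRegular C)
    (hsimp : ¬ (C : PointedCone ℝ E).IsSimplicial) : HasSandwich C := by
  induction hn : Module.finrank ℝ E using Nat.strong_induction_on generalizing E with
  | _ n ih =>
    subst hn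
    by_contra hns
    refine hsimp (isSimplicial_of_faces hC hns (fun h hh h0 => ?_) fun ξ hξ h0 => ?_)
    · refine isSimplicial_of_spanCone (of_not_not fun hF => hns ?_)
      exact .of_spanCone_face hC hh (ih _ (finrank_span_face_lt h0)
        (isRegular_spanCone fun x hx hnx => hC.salient x hx.1 hnx.1) hF rfl)
    · have hreg : IsRegular (spanCone (face (dual C) ξ)) :=
        isRegular_spanCone fun f hf hnf => hC.dual_salient f hf.1 hnf.1
      refine isSimplicial_of_spanCone (isSimplicial_of_dual hreg (of_not_not fun hF => hns ?_))
      exact .of_dual_spanCone_face hC hξ (ih _ (finrank_span_face_lt h0) hreg.dual hF rfl)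

end Induction

section SquareForm

/-- The bilinear form of the entangled state, on the values `a` and `b` which two functionals
take at the vertices of two squares. -/
def squareForm (a b : Fin 4 → ℝ) : ℝ := a 2 * b 2 + a 0 * b 1 + a 1 * b 0 - a 1 * b 1

/-- The witness of entanglement, on the values `P i j` which a bilinear form takes at the pairs
of functionals from two squares. -/
def squareWitness (P : Fin 4 → Fin 4 → ℝ) : ℝ := P 0 2 - P 0 1 + P 3 0 + P 1 1

theorem min_mul_le_squareForm {a b : Fin 4 → ℝ} (ha : ∀ i, 0 ≤ a i) (hb : ∀ i, 0 ≤ b i)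
    (ha_rel : a 0 + a 2 = a 1 + a 3) (hb_rel : b 0 + b 2 = b 1 + b 3) :
    min (a 2) (a 3) * b 2 ≤ squareForm a b := by
  rw [squareForm]
  rcases le_total (a 1) (a 0) with h | h
  · have hmin := mul_le_mul_of_nonneg_right (min_le_left (a 2) (a 3)) (hb 2)
    linarith [mul_nonneg (sub_nonneg.2 h) (hb 1), mul_nonneg (ha 1) (hb 0)]
  · have hmin := mul_le_mul_of_nonneg_right (min_le_right (a 2) (a 3)) (hb 2)
    have hexp : a 2 * b 2 + a 0 * b 1 + a 1 * b 0 - a 1 * b 1 =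
        a 3 * b 2 + (a 1 - a 0) * b 3 + a 0 * b 0 := by
      linear_combination b 2 * ha_rel + (a 1 - a 0) * hb_rel
    linarith [mul_nonneg (sub_nonneg.2 h) (hb 3), mul_nonneg (ha 0) (hb 0)]

theorem half_mul_le_add_mul_add_mul {p q s r r' d g δ : ℝ} (hp : 0 ≤ p) (hq : 0 ≤ q) (hs : 0 ≤ s)
    (hr : 0 ≤ r) (hr' : 0 ≤ r') (hg : 0 ≤ g) (hδ : 0 ≤ δ) (hδ1 : δ ≤ 1) (hrr' : δ * g ≤ r + r')
    (hpq : d ≤ q + p) (hps : d ≤ 2 * p + s) :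
    δ / 2 * (d * g) ≤ p * g + q * r + s * r' := by
  have hδp : δ * p ≤ p := mul_le_of_le_one_left hp hδ1
  have hmin : d / 2 ≤ min q s + p := by
    rw [← min_add_add_right]
    exact le_min (by linarith) (by linarith)
  calc δ / 2 * (d * g) = δ * (d / 2) * g := by ring
    _ ≤ δ * (min q s + p) * g := by gcongr
    _ = δ * p * g + min q s * (δ * g) := by ring
    _ ≤ p * g + min q s * (r + r') := by gcongr
    _ = p * g + min q s * r + min q s * r' := by ring
    _ ≤ p * g + q * r + s * r' := by gcongr <;> simp

theorem mul_le_squareWitness {a b : Fin 4 → ℝ} {δ δ' : ℝ} (ha : ∀ i, 0 ≤ a i)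
    (hb : ∀ i, 0 ≤ b i) (hδ : 0 ≤ δ) (hδ1 : δ ≤ 1) (hδ' : 0 ≤ δ') (hδ'1 : δ' ≤ 1)
    (ha_rel : a 0 + a 2 = a 1 + a 3) (hb_rel : b 0 + b 2 = b 1 + b 3)
    (ha_left : δ * (a 0 + a 2) ≤ a 1 + a 2) (ha_right : δ * (a 0 + a 2) ≤ a 2 + a 3)
    (hb_left : δ' * (b 0 + b 2) ≤ b 1 + b 2) (hb_right : δ' * (b 0 + b 2) ≤ b 2 + b 3) :
    δ * δ' / 2 * (a 0 * b 0) ≤ squareWitness fun i j => a i * b j := by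
  have hδa : δ * a 0 ≤ δ * (a 0 + a 2) := by gcongr; linarith [ha 2]
  have hδb : δ' * b 0 ≤ δ' * (b 0 + b 2) := by gcongr; linarith [hb 2]
  have hδa0 : δ * a 0 ≤ a 0 := mul_le_of_le_one_left (ha 0) hδ1
  rw [squareWitness]
  rcases le_total (a 0) (a 1) with h | h
  · have hle := half_mul_le_add_mul_add_mul (d := δ * a 0) (ha 3) (ha 0) (sub_nonneg.2 h) (hb 2)
      (hb 1) (hb 0) hδ' hδ'1 (by linarith) (by linarith [ha 3]) (by linarith)
    linarith
  · have hle := half_mul_le_add_mul_add_mul (d := δ * a 0) (ha 2) (ha 1) (sub_nonneg.2 h) (hb 2)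
      (hb 3) (hb 0) hδ' hδ'1 (by linarith) (by linarith) (by linarith)
    have hexp : a 0 * b 2 - a 0 * b 1 + a 3 * b 0 + a 1 * b 1 =
        a 2 * b 0 + a 1 * b 2 + (a 0 - a 1) * b 3 := by
      linear_combination (-b 0) * ha_rel + (a 0 - a 1) * hb_rel
    linarith

end SquareForm

section Limit

theorem squareForm_eq_of_diag {a b : Fin 4 → ℝ} (ha0 : a 0 = 0) (hb0 : b 0 = 0)
    (ha_rel : a 0 + a 2 = a 1 + a 3) (hb_rel : b 0 + b 2 = b 1 + b 3) :
    squareForm a b = a 3 * b 2 + a 1 * b 3 := by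
  rw [ha0, zero_add] at ha_rel
  rw [hb0, zero_add] at hb_rel
  rw [squareForm, ha0, hb0]
  linear_combination b 2 * ha_rel + a 1 * hb_rel

theorem squareWitness_eq_of_diag {A B : Fin 4 → Fin 4 → ℝ} (hA : ∀ i, A i i = 0)
    (hB : ∀ i, B i i = 0) (hA_row : ∀ i, A i 0 + A i 2 = A i 1 + A i 3)
    (hB_row : ∀ i, B i 0 + B i 2 = B i 1 + B i 3)
    (hA_col : ∀ j, A 0 j + A 2 j = A 1 j + A 3 j) (hB_col : ∀ j, B 0 j + B 2 j = B 1 j + B 3 j) :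
    squareWitness (fun i j => squareForm (A i) (B j)) =
      (A 0 3 - A 1 2) * (B 0 3 - B 1 2) := by
  have hA02 : A 0 2 = A 0 1 + A 0 3 := by linarith [hA_row 0, hA 0]
  have hA32 : A 3 2 = A 0 2 - A 1 2 := by linarith [hA_col 2, hA 2]
  have hA30 : A 3 0 = A 3 1 - A 3 2 := by linarith [hA_row 3, hA 3]
  have hB02 : B 0 2 = B 0 1 + B 0 3 := by linarith [hB_row 0, hB 0]
  have hB20 : B 2 0 = B 2 1 + B 2 3 := by linarith [hB_row 2, hB 2]
  have hB23 : B 2 3 = B 1 0 + B 1 2 - B 0 3 := by linarith [hB_col 3, hB 3, hB_row 1, hB 1]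
  simp only [squareWitness, squareForm, hA 0, hA 1, hB 0, hB 1, hB 2, hA30, hA32, hA02, hB02, hB20,
    hB23]
  ring

variable {E F : Type*} [NormedAddCommGroup E] [InnerProductSpace ℝ E] [CompleteSpace E]
  [NormedAddCommGroup F] [InnerProductSpace ℝ F] [CompleteSpace F]
  {C : ProperCone ℝ E} {K : ProperCone ℝ F}

theorem HasSandwich.exists_pos (h : HasSandwich C) :
    ∃ δ : ℝ, 0 < δ ∧ δ ≤ 1 / 2 ∧ ∃ A ∈ closure (sandwichMatrices C δ),
      (∀ i, A i i = 0) ∧ 0 < A 0 2 ∧ 0 < A 0 3 := by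
  obtain ⟨δ, hδ, hδ2, A, hA, hdiag, hpos⟩ := h
  have hrow := row_of_mem_closure_sandwichMatrices hA 0
  rw [hdiag 0, zero_add] at hrow
  rcases (nonneg_of_mem_closure_sandwichMatrices hA 0 3).eq_or_lt with h0 | h0
  · exact ⟨δ, hδ, hδ2, _, reverse_mem_closure_sandwichMatrices hA, fun i => hdiag (-i), hpos,
      show 0 < A 0 1 by linarith⟩
  · exact ⟨δ, hδ, hδ2, A, hA, hdiag, hpos, h0⟩

theorem HasSandwich.exists_mul_sub_nonpos (h : HasSandwich C) (d : ℝ) :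
    ∃ δ : ℝ, 0 < δ ∧ δ ≤ 1 / 2 ∧ ∃ A ∈ closure (sandwichMatrices C δ),
      (∀ i, A i i = 0) ∧ 0 < A 0 2 ∧ d * (A 0 3 - A 1 2) ≤ 0 := by
  obtain ⟨δ, hδ, hδ2, A, hA, hdiag, hpos⟩ := h
  rcases le_total (d * (A 0 3 - A 1 2)) 0 with hle | hle
  · exact ⟨δ, hδ, hδ2, A, hA, hdiag, hpos, hle⟩
  · refine ⟨δ, hδ, hδ2, _, reverse_mem_closure_sandwichMatrices hA, fun i => hdiag (-i), hpos, ?_⟩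
    have hflip : A 0 1 - A 3 2 = -(A 0 3 - A 1 2) := by
      linarith [row_of_mem_closure_sandwichMatrices hA 0,
        col_of_mem_closure_sandwichMatrices hA 2, hdiag 0, hdiag 2]
    calc d * (A 0 1 - A 3 2) = -(d * (A 0 3 - A 1 2)) := by rw [hflip, mul_neg]
      _ ≤ 0 := neg_nonpos.2 hle

theorem exists_sandwich_squareWitness_lt (hC : HasSandwich C) (hK : HasSandwich K) :
    ∃ δ δ' : ℝ, 0 < δ ∧ δ ≤ 1 / 2 ∧ 0 < δ' ∧ δ' ≤ 1 / 2 ∧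
      ∃ x f y g, Sandwich C δ x f ∧ Sandwich K δ' y g ∧ x 2 ≠ 0 ∧ x 3 ≠ 0 ∧ y 2 ≠ 0 ∧
        squareWitness (fun i j => squareForm (fun k => ⟪f i, x k⟫) fun k => ⟪g j, y k⟫) <
          δ * δ' / 2 * squareForm (fun k => ⟪f 0, x k⟫) fun k => ⟪g 0, y k⟫ := by
  obtain ⟨δ, hδ, hδ2, A, hA, hA_diag, hA02, hA03⟩ := hC.exists_pos
  obtain ⟨δ', hδ', hδ'2, B, hB, hB_diag, hB02, hAB⟩ := hK.exists_mul_sub_nonpos (A 0 3 - A 1 2)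
  have hA_row := row_of_mem_closure_sandwichMatrices hA
  have hB_row := row_of_mem_closure_sandwichMatrices hB
  have hform : 0 < squareForm (A 0) (B 0) := by
    rw [squareForm_eq_of_diag (hA_diag 0) (hB_diag 0) (hA_row 0) (hB_row 0)]
    exact add_pos_of_pos_of_nonneg (mul_pos hA03 hB02)
      (mul_nonneg (nonneg_of_mem_closure_sandwichMatrices hA 0 1)
        (nonneg_of_mem_closure_sandwichMatrices hB 0 3))
  have hwitness : squareWitness (fun i j => squareForm (A i) (B j)) <
      δ * δ' / 2 * squareForm (A 0) (B 0) := by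
    rw [squareWitness_eq_of_diag hA_diag hB_diag hA_row hB_row
      (col_of_mem_closure_sandwichMatrices hA) (col_of_mem_closure_sandwichMatrices hB)]
    exact hAB.trans_lt (by positivity)
  let U : Set ((Fin 4 → Fin 4 → ℝ) × (Fin 4 → Fin 4 → ℝ)) :=
    {p | 0 < p.1 0 2 ∧ 0 < p.1 0 3 ∧ 0 < p.2 0 2 ∧
      squareWitness (fun i j => squareForm (p.1 i) (p.2 j)) <
        δ * δ' / 2 * squareForm (p.1 0) (p.2 0)}
  have hU : IsOpen U := by
    unfold U squareWitness squareForm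
    refine (isOpen_lt ?_ ?_).and <| (isOpen_lt ?_ ?_).and <| (isOpen_lt ?_ ?_).and <|
      isOpen_lt ?_ ?_ <;> fun_prop
  have hmem : (A, B) ∈ closure (sandwichMatrices C δ ×ˢ sandwichMatrices K δ') := by
    rw [closure_prod_eq]
    exact ⟨hA, hB⟩
  obtain ⟨⟨P, Q⟩, ⟨hx2, hx3, hy2, hlt⟩, ⟨x, f, hxf, rfl⟩, ⟨y, g, hyg, rfl⟩⟩ :=
    mem_closure_iff.1 hmem U hU ⟨hA02, hA03, hB02, hwitness⟩
  exact ⟨δ, δ', hδ, hδ2, hδ', hδ'2, x, f, y, g, hxf, hyg, ne_zero_of_inner_pos hx2,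
    ne_zero_of_inner_pos hx3, ne_zero_of_inner_pos hy2, hlt⟩

end Limit

section BilinearForm

variable {E F : Type*} [NormedAddCommGroup E] [NormedSpace ℝ E]
  [NormedAddCommGroup F] [NormedSpace ℝ F]

/-- The bilinear form on functionals whose value at `φ, ψ` is the `squareForm` of their values on
two squares `x` and `y`; up to normalization it is the entangled state. -/
noncomputable def squareState (x : Fin 4 → E) (y : Fin 4 → F) :
    Module.Dual ℝ E →ₗ[ℝ] Module.Dual ℝ F →ₗ[ℝ] ℝ :=
  prodForm (x 2) (y 2) + prodForm (x 0) (y 1) + prodForm (x 1) (y 0) - prodForm (x 1) (y 1)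

theorem squareState_apply (x : Fin 4 → E) (y : Fin 4 → F) (φ : Module.Dual ℝ E)
    (ψ : Module.Dual ℝ F) :
    squareState x y φ ψ = squareForm (fun k => φ (x k)) fun k => ψ (y k) := rfl

/-- The entanglement witness attached to two squares `φ` and `ψ` of functionals: the
`squareWitness` of the values of a bilinear form, corrected by a multiple `κ` of one of them. -/
def witnessMap (κ : ℝ) (φ : Fin 4 → Module.Dual ℝ E) (ψ : Fin 4 → Module.Dual ℝ F) :
    (Module.Dual ℝ E →ₗ[ℝ] Module.Dual ℝ F →ₗ[ℝ] ℝ) →ₗ[ℝ] ℝ where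
  toFun ω := squareWitness (fun i j => ω (φ i) (ψ j)) - κ * ω (φ 0) (ψ 0)
  map_add' ω ω' := by
    simp only [squareWitness, LinearMap.add_apply]
    ring
  map_smul' c ω := by
    simp only [squareWitness, LinearMap.smul_apply, smul_eq_mul, RingHom.id_apply]
    ring

theorem witnessMap_apply (κ : ℝ) (φ : Fin 4 → Module.Dual ℝ E) (ψ : Fin 4 → Module.Dual ℝ F)
    (ω : Module.Dual ℝ E →ₗ[ℝ] Module.Dual ℝ F →ₗ[ℝ] ℝ) :
    witnessMap κ φ ψ ω = squareWitness (fun i j => ω (φ i) (ψ j)) - κ * ω (φ 0) (ψ 0) := rfl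

theorem ne_sum_prodForm_of_witness {P : Set E} {Q : Set F}
    {ω : Module.Dual ℝ E →ₗ[ℝ] Module.Dual ℝ F →ₗ[ℝ] ℝ}
    {L : (Module.Dual ℝ E →ₗ[ℝ] Module.Dual ℝ F →ₗ[ℝ] ℝ) →ₗ[ℝ] ℝ}
    (hL : ∀ α ∈ P, ∀ β ∈ Q, 0 ≤ L (prodForm α β)) (hω : L ω < 0) :
    ¬ ∃ (k : ℕ) (α : Fin k → E) (β : Fin k → F),
      (∀ i, α i ∈ P) ∧ (∀ i, β i ∈ Q) ∧ ω = ∑ i, prodForm (α i) (β i) := by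
  rintro ⟨k, α, β, hα, hβ, rfl⟩
  rw [map_sum] at hω
  exact hω.not_ge (Finset.sum_nonneg fun i _ => hL _ (hα i) _ (hβ i))

end BilinearForm

section StateSpace

variable {E : Type*} [NormedAddCommGroup E] [NormedSpace ℝ E]

theorem isSimplex_convexHull_range {ι : Type*} [Finite ι] {v : ι → E}
    (hv : AffineIndependent ℝ v) : IsSimplex (convexHull ℝ (Set.range v)) := by
  classical
  cases nonempty_fintype ι
  have hrange : ((Finset.univ.image v : Finset E) : Set E) = Set.range v := by
    rw [Finset.coe_image, Finset.coe_univ, Set.image_univ]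
  refine ⟨Finset.univ.image v, ?_, by rw [hrange]⟩
  have hv' := hv.range
  rwa [← hrange] at hv'

theorem convex_stateSpace (A : ASS E) : Convex ℝ (stateSpace A) := by
  rintro x ⟨hx, hx1⟩ y ⟨hy, hy1⟩ a b ha hb hab
  refine ⟨A.add_mem _ (A.smul_mem a ha x hx) _ (A.smul_mem b hb y hy), ?_⟩
  rw [map_add, map_smul, map_smul, hx1, hy1, smul_eq_mul, smul_eq_mul, mul_one, mul_one, hab]

theorem zero_mem_pos (A : ASS E) : (0 : E) ∈ A.pos := by
  obtain ⟨x, hx, -⟩ := A.generating 0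
  simpa only [zero_smul] using A.smul_mem 0 le_rfl x hx

theorem u_mem_dualCone (A : ASS E) : A.u ∈ dualCone A := fun x hx => by
  rcases eq_or_ne x 0 with rfl | h0
  · rw [map_zero]
  · exact (A.u_strict x hx h0).le

/-- The positive cone of `A`, bundled. -/
def positiveCone (A : ASS E) (hA : IsClosed A.pos) : ProperCone ℝ E where
  carrier := A.pos
  add_mem' hx hy := A.add_mem _ hx _ hy
  zero_mem' := zero_mem_pos A
  smul_mem' c _ hx := A.smul_mem c c.2 _ hx
  isClosed' := hA

theorem isSimplex_of_isSimplicial {A : ASS E} {hA : IsClosed A.pos}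
    (h : (positiveCone A hA : PointedCone ℝ E).IsSimplicial) : IsSimplex (stateSpace A) := by
  obtain ⟨s, hs, hpos, hgen⟩ := exists_finset_of_isSimplicial h
  have hu (i : s) : 0 < A.u i := A.u_strict _ (hpos i) (hs.ne_zero i)
  let v : s → E := fun i => (A.u i)⁻¹ • (i : E)
  have hv_mem (i : s) : v i ∈ stateSpace A :=
    ⟨A.smul_mem _ (inv_pos.2 (hu i)).le _ (hpos i), by
      rw [map_smul, smul_eq_mul, inv_mul_cancel₀ (hu i).ne']⟩
  have hv : LinearIndependent ℝ v :=
    hs.units_smul fun i => (Units.mk0 (A.u i) (hu i).ne')⁻¹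
  suffices stateSpace A = convexHull ℝ (Set.range v) by
    rw [this]
    exact isSimplex_convexHull_range hv.affineIndependent
  refine Set.Subset.antisymm ?_
    (convexHull_min (Set.range_subset_iff.2 hv_mem) (convex_stateSpace A))
  rintro x ⟨hx, hx1⟩
  obtain ⟨c, hc, rfl⟩ := hgen x hx
  have hsum : ∑ i, c i * A.u i = 1 := by
    simpa only [map_sum, map_smul, smul_eq_mul] using hx1
  have hcv : ∑ i, c i • (i : E) = ∑ i, (c i * A.u i) • v i :=
    Finset.sum_congr rfl fun i _ => by rw [smul_smul, mul_inv_cancel_right₀ (hu i).ne']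
  rw [hcv]
  exact (convex_convexHull ℝ _).sum_mem (fun i _ => mul_nonneg (hc i) (hu i).le) hsum
    fun i _ => subset_convexHull ℝ _ (Set.mem_range_self i)

variable [FiniteDimensional ℝ E]

/-- The positive cone of `A`, moved to a Euclidean space where it can be paired with its dual
cone through the inner product. -/
noncomputable def euclideanCone (A : ASS E) (hA : IsClosed A.pos) :
    ProperCone ℝ (EuclideanSpace ℝ (Fin (Module.finrank ℝ E))) :=
  ProperCone.comap (toEuclidean (E := E)).symm.toContinuousLinearMap (positiveCone A hA)

theorem mem_euclideanCone {A : ASS E} {hA : IsClosed A.pos}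
    {x : EuclideanSpace ℝ (Fin (Module.finrank ℝ E))} :
    x ∈ euclideanCone A hA ↔ (toEuclidean (E := E)).symm x ∈ A.pos := Iff.rfl

theorem toEuclidean_mem_euclideanCone {A : ASS E} {hA : IsClosed A.pos} {x : E} (hx : x ∈ A.pos) :
    toEuclidean x ∈ euclideanCone A hA := by
  rwa [mem_euclideanCone, ContinuousLinearEquiv.symm_apply_apply]

theorem isRegular_euclideanCone (A : ASS E) (hA : IsClosed A.pos) :
    IsRegular (euclideanCone A hA) where
  salient x hx hnx := by
    by_contra h0
    have hpos := A.u_strict _ (mem_euclideanCone.1 hx)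
      ((toEuclidean (E := E)).symm.map_ne_zero_iff.2 h0)
    have hneg := u_mem_dualCone A _ (mem_euclideanCone.1 hnx)
    rw [map_neg, map_neg] at hneg
    linarith
  dual_salient f hf hnf := by
    have hzero (x : E) (hx : x ∈ A.pos) : ⟪f, toEuclidean x⟫ = 0 := by
      have hneg := inner_nonneg hnf (toEuclidean_mem_euclideanCone (hA := hA) hx)
      rw [inner_neg_left, neg_nonneg] at hneg
      exact hneg.antisymm (inner_nonneg hf (toEuclidean_mem_euclideanCone hx))
    obtain ⟨x, hx, y, hy, hxy⟩ := A.generating ((toEuclidean (E := E)).symm f)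
    rw [ContinuousLinearEquiv.symm_apply_eq, map_sub] at hxy
    rw [← inner_self_eq_zero (𝕜 := ℝ)]
    nth_rw 2 [hxy]
    rw [inner_sub_right, hzero x hx, hzero y hy, sub_zero]

theorem hasSandwich_of_not_isSimplex {A : ASS E} {hA : IsClosed A.pos}
    (h : ¬ IsSimplex (stateSpace A)) : HasSandwich (euclideanCone A hA) := by
  refine hasSandwich_of_not_isSimplicial (isRegular_euclideanCone A hA) fun hsimp => h ?_
  apply isSimplex_of_isSimplicial (hA := hA)
  convert isSimplicial_map hsimp (T := (toEuclidean (E := E)).symm.toLinearMap)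
    (toEuclidean (E := E)).symm.injective
  ext x
  constructor
  · exact fun hx => ⟨toEuclidean x, toEuclidean_mem_euclideanCone hx, by simp⟩
  · rintro ⟨y, hy, rfl⟩
    exact hy

end StateSpace

section Entangled

theorem Sandwich.mul_le_squareWitness {E F : Type*} [NormedAddCommGroup E] [InnerProductSpace ℝ E]
    [CompleteSpace E] [NormedAddCommGroup F] [InnerProductSpace ℝ F] [CompleteSpace F]
    {C : ProperCone ℝ E} {K : ProperCone ℝ F} {δ δ' : ℝ} {x f : Fin 4 → E} {y g : Fin 4 → F}
    (hf : Sandwich C δ x f) (hg : Sandwich K δ' y g) (hδ : 0 ≤ δ) (hδ1 : δ ≤ 1) (hδ' : 0 ≤ δ')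
    (hδ'1 : δ' ≤ 1) {α : E} (hα : α ∈ C) {β : F} (hβ : β ∈ K) :
    δ * δ' / 2 * (⟪f 0, α⟫ * ⟪g 0, β⟫) ≤ squareWitness fun i j => ⟪f i, α⟫ * ⟪g j, β⟫ := by
  refine ConeEntanglement.mul_le_squareWitness (fun i => inner_nonneg (hf.dual_mem i) hα)
    (fun i => inner_nonneg (hg.dual_mem i) hβ) hδ hδ1 hδ' hδ'1 ?_ ?_ ?_ ?_ ?_ ?_ <;>
    simp only [← inner_add_left]
  · rw [hf.dual_rel]
  · rw [hg.dual_rel]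
  · exact mul_inner_le_inner hf.left_mem hα
  · exact mul_inner_le_inner hf.right_mem hα
  · exact mul_inner_le_inner hg.left_mem hβ
  · exact mul_inner_le_inner hg.right_mem hβ

variable {E F : Type*} [NormedAddCommGroup E] [NormedSpace ℝ E] [FiniteDimensional ℝ E]
  [NormedAddCommGroup F] [NormedSpace ℝ F] [FiniteDimensional ℝ F]

theorem exists_entangled_form {A : ASS E} {hA : IsClosed A.pos} {B : ASS F} {hB : IsClosed B.pos}
    (hC : HasSandwich (euclideanCone A hA)) (hK : HasSandwich (euclideanCone B hB)) :
    ∃ (ω : Module.Dual ℝ E →ₗ[ℝ] Module.Dual ℝ F →ₗ[ℝ] ℝ)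
      (L : (Module.Dual ℝ E →ₗ[ℝ] Module.Dual ℝ F →ₗ[ℝ] ℝ) →ₗ[ℝ] ℝ),
      (∀ a ∈ dualCone A, ∀ b ∈ dualCone B, 0 ≤ ω a b) ∧ 0 < ω A.u B.u ∧
        (∀ α ∈ A.pos, ∀ β ∈ B.pos, 0 ≤ L (prodForm α β)) ∧ L ω < 0 := by
  obtain ⟨δ, δ', hδ, hδ2, hδ', hδ'2, x, f, y, g, hxf, hyg, hx2, hx3, hy2, hlt⟩ :=
    exists_sandwich_squareWitness_lt hC hK
  let S := toEuclidean (E := E)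
  let T := toEuclidean (E := F)
  have hx_rel (a : Module.Dual ℝ E) :
      a (S.symm (x 0)) + a (S.symm (x 2)) = a (S.symm (x 1)) + a (S.symm (x 3)) := by
    simp only [← map_add, hxf.rel]
  have hy_rel (b : Module.Dual ℝ F) :
      b (T.symm (y 0)) + b (T.symm (y 2)) = b (T.symm (y 1)) + b (T.symm (y 3)) := by
    simp only [← map_add, hyg.rel]
  have hlower {a b} (ha : a ∈ dualCone A) (hb : b ∈ dualCone B) :
      min (a (S.symm (x 2))) (a (S.symm (x 3))) * b (T.symm (y 2)) ≤
        squareState (S.symm ∘ x) (T.symm ∘ y) a b :=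
    min_mul_le_squareForm (fun i => ha _ (hxf.mem i)) (fun i => hb _ (hyg.mem i)) (hx_rel a)
      (hy_rel b)
  refine ⟨squareState (S.symm ∘ x) (T.symm ∘ y),
    witnessMap (δ * δ' / 2) (fun i => innerₛₗ ℝ (f i) ∘ₗ S.toLinearMap)
      (fun j => innerₛₗ ℝ (g j) ∘ₗ T.toLinearMap), fun a ha b hb => ?_, ?_, fun α hα β hβ => ?_, ?_⟩
  · exact (mul_nonneg (le_min (ha _ (hxf.mem 2)) (ha _ (hxf.mem 3))) (hb _ (hyg.mem 2))).trans
      (hlower ha hb)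
  · exact (mul_pos (lt_min (A.u_strict _ (hxf.mem 2) (S.symm.map_ne_zero_iff.2 hx2))
      (A.u_strict _ (hxf.mem 3) (S.symm.map_ne_zero_iff.2 hx3)))
      (B.u_strict _ (hyg.mem 2) (T.symm.map_ne_zero_iff.2 hy2))).trans_le
      (hlower (u_mem_dualCone A) (u_mem_dualCone B))
  · exact sub_nonneg.2 (hxf.mul_le_squareWitness hyg hδ.le (by linarith) hδ'.le (by linarith)
      (toEuclidean_mem_euclideanCone hα) (toEuclidean_mem_euclideanCone hβ))
  · rw [witnessMap_apply, sub_neg]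
    simpa [squareState_apply, S, T] using hlt

end Entangled

end ConeEntanglement

open ConeEntanglement in
/-- If neither state space is a simplex, there is an entangled state: a normalized
positive bilinear form on A* × B* that is not a mixture of product states. -/
theorem entangled_state_exists_of_nonclassical
    [FiniteDimensional ℝ V] [FiniteDimensional ℝ W]
    (A : ASS V) (B : ASS W)
    (hAclosed : IsClosed A.pos) (hBclosed : IsClosed B.pos)
    (hA : ¬ IsSimplex (stateSpace A)) (hB : ¬ IsSimplex (stateSpace B)) :
    ∃ ω : Module.Dual ℝ V →ₗ[ℝ] Module.Dual ℝ W →ₗ[ℝ] ℝ,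
      (∀ a ∈ dualCone A, ∀ b ∈ dualCone B, 0 ≤ ω a b) ∧
      ω A.u B.u = 1 ∧
      ¬ ∃ (k : ℕ) (α : Fin k → V) (β : Fin k → W),
          (∀ i, α i ∈ A.pos) ∧ (∀ i, β i ∈ B.pos) ∧
          ω = ∑ i, prodForm (α i) (β i) := by
  obtain ⟨ω, L, hω, hpos, hL, hneg⟩ := exists_entangled_form
    (hasSandwich_of_not_isSimplex (hA := hAclosed) hA)
    (hasSandwich_of_not_isSimplex (hA := hBclosed) hB)
  have hinv : 0 < (ω A.u B.u)⁻¹ := inv_pos.2 hpos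
  refine ⟨(ω A.u B.u)⁻¹ • ω, fun a ha b hb => mul_nonneg hinv.le (hω a ha b hb),
    inv_mul_cancel₀ hpos.ne', ne_sum_prodForm_of_witness hL ?_⟩
  rw [map_smul]
  exact mul_neg_of_pos_of_neg hinv hneg
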